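/- arXiv:1406.7791 — 5 statements merged into one kernel-verified Lean document; each statement's English description precedes it below -/
import Mathlib

section
/- Let R be a commutative noetherian ring over which every flat R-module has finite projective dimension, let S be a faithfully flat R-algebra, and let N be an R-module. If Hom_R(S,N) is an injective S-module and Ext_R^n(S,N) = 0 for all n > 0, then N is an injective R-module. -/
/-!
Common definitions: `extmod R M N n` is the `n`-th Ext module `Ext_R^n(M,N)`.
-/

open CategoryTheory

universe u

/-- `Ext_R^n(M,N)`, the `n`-th Ext of the `R`-modules `M` and `N`, as an object of
`ModuleCat R`. -/
noncomputable def extmod (R : Type u) [CommRing R] (M N : Type u) [AddCommGroup M] [Module R M]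
    [AddCommGroup N] [Module R N] (n : ℕ) : ModuleCat.{u} R :=
  ((Ext R (ModuleCat.{u} R) n).obj (Opposite.op (ModuleCat.of R M))).obj (ModuleCat.of R N)

/-- The `R`-module `M` admits a projective resolution `P` with `P_m = 0` for all `m > j`;
i.e. `M` has projective dimension at most `j`. -/
def projResBddAbove (R : Type u) [CommRing R] (M : ModuleCat.{u} R) (j : ℕ) : Prop :=
  ∃ P : ProjectiveResolution M, ∀ m : ℕ, j < m → Limits.IsZero (P.complex.X m)

section
open Limits TensorProduct
variable {R : Type u} [CommRing R]

theorem aux_ses {A B C : Type u} [AddCommGroup A] [AddCommGroup B] [AddCommGroup C]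
    [Module R A] [Module R B] [Module R C] (f : A →ₗ[R] B) (g : B →ₗ[R] C)
    (hf : Function.Injective f) (hg : Function.Surjective g) (H : Function.Exact f g)
    (h0 : ModuleCat.ofHom f ≫ ModuleCat.ofHom g = 0) :
    (ShortComplex.mk (ModuleCat.ofHom f) (ModuleCat.ofHom g) h0).ShortExact := by
  refine ShortComplex.ShortExact.mk' ?_ ?_ ?_
  · rw [ShortComplex.ShortExact.moduleCat_exact_iff_function_exact]; exact H
  · exact (ModuleCat.mono_iff_injective _).2 hf
  · exact (ModuleCat.epi_iff_surjective _).2 hg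

theorem aux_zero {A B C : Type u} [AddCommGroup A] [AddCommGroup B] [AddCommGroup C]
    [Module R A] [Module R B] [Module R C] {f : A →ₗ[R] B} {g : B →ₗ[R] C}
    (H : Function.Exact f g) : ModuleCat.ofHom f ≫ ModuleCat.ofHom g = 0 := by
  ext x
  exact H.apply_apply_eq_zero x

theorem aux_hpd {M : ModuleCat.{u} R} {j : ℕ} (h : projResBddAbove R M j) :
    HasProjectiveDimensionLT M (j + 1) := by
  obtain ⟨P, hP⟩ := h
  refine HasProjectiveDimensionLT.mk fun i hi Y e => ?_
  obtain ⟨f, hf, rfl⟩ := P.extMk_surjective e (i + 1) rfl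
  obtain rfl : f = 0 := (hP i (by omega)).eq_of_src _ _
  exact P.extMk_zero _ _

theorem aux_old {M N : Type u} [AddCommGroup M] [Module R M] [AddCommGroup N] [Module R N]
    (n : ℕ) (h : Subsingleton (extmod R M N (n + 1))) :
    Subsingleton (Abelian.Ext (ModuleCat.of R M) (ModuleCat.of R N) (n + 1)) := by
  let P := projectiveResolution (ModuleCat.of R M)
  have hz : IsZero ((P.complex.linearYonedaObj R (ModuleCat.of R N)).homology (n + 1)) :=
    (ModuleCat.isZero_of_subsingleton (extmod R M N (n + 1))).of_iso (P.isoExt _ _).symm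
  rw [← HomologicalComplex.exactAt_iff_isZero_homology,
    HomologicalComplex.exactAt_iff' _ n (n + 1) (n + 2) (by simp) (by simp),
    ShortComplex.moduleCat_exact_iff] at hz
  refine ⟨fun a b => ?_⟩
  suffices ∀ a : Abelian.Ext (ModuleCat.of R M) (ModuleCat.of R N) (n + 1), a = 0 by rw [this a, this b]
  intro a
  obtain ⟨f, hf, rfl⟩ := P.extMk_surjective a (n + 2) rfl
  rw [P.extMk_eq_zero_iff _ _ _ _ n rfl]
  obtain ⟨g, hg⟩ := hz f hf
  exact ⟨g, hg⟩

theorem aux_coprod {S : Type u} [AddCommGroup S] [Module R S] (ι : Type u) (n : ℕ)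
    (N : ModuleCat.{u} R) (h : Subsingleton (Abelian.Ext (ModuleCat.of R S) N (n + 1))) :
    Subsingleton (Abelian.Ext (ModuleCat.of R (ι →₀ S)) N (n + 1)) := by
  induction n generalizing N with
  | zero =>
    let T : ShortComplex (ModuleCat.{u} R) := ShortComplex.mk (Injective.ι N) (cokernel.π _) (cokernel.condition _)
    have hT : T.ShortExact := { exact := ShortComplex.exact_cokernel _ }
    refine subsingleton_of_forall_eq 0 fun x => ?_
    obtain ⟨y, rfl⟩ := Abelian.Ext.covariant_sequence_exact₁ _ hT x
      (Abelian.Ext.eq_zero_of_injective (I := Injective.under N) _) rfl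
    obtain ⟨y, rfl⟩ := (Abelian.Ext.mk₀_bijective _ _).2 y
    have key : ∀ i : ι, ∃ z : ModuleCat.of R S ⟶ T.X₂,
        z ≫ T.g = ModuleCat.ofHom (Finsupp.lsingle i) ≫ y := by
      intro i
      obtain ⟨z, hz⟩ := Abelian.Ext.covariant_sequence_exact₃ (ModuleCat.of R S) hT
        (Abelian.Ext.mk₀ (ModuleCat.ofHom (Finsupp.lsingle i) ≫ y)) (n₁ := 1) rfl (Subsingleton.elim _ _)
      obtain ⟨z, rfl⟩ := (Abelian.Ext.mk₀_bijective _ _).2 z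
      refine ⟨z, (Abelian.Ext.mk₀_bijective _ _).1 ?_⟩
      rw [← hz, Abelian.Ext.mk₀_comp_mk₀]
    choose z hz using key
    have : y = ModuleCat.ofHom (Finsupp.lsum R fun i => (z i).hom) ≫ T.g := by
      ext i s
      have := congrArg (fun q => q.hom s) (hz i)
      simpa using this.symm
    rw [this, ← Abelian.Ext.mk₀_comp_mk₀, Abelian.Ext.comp_assoc_of_second_deg_zero, hT.comp_extClass, Abelian.Ext.comp_zero]
  | succ n ih =>
    let T : ShortComplex (ModuleCat.{u} R) := ShortComplex.mk (Injective.ι N) (cokernel.π _) (cokernel.condition _)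
    have hT : T.ShortExact := { exact := ShortComplex.exact_cokernel _ }
    have h1 : Subsingleton (Abelian.Ext (ModuleCat.of R S) T.X₃ (n + 1)) := by
      refine subsingleton_of_forall_eq 0 fun x => ?_
      obtain ⟨y, rfl⟩ := Abelian.Ext.covariant_sequence_exact₃ _ hT x rfl (Subsingleton.elim _ _)
      rw [Abelian.Ext.eq_zero_of_injective (I := Injective.under N) y, Abelian.Ext.zero_comp]
    have h2 := ih _ h1
    refine subsingleton_of_forall_eq 0 fun x => ?_
    obtain ⟨y, rfl⟩ := Abelian.Ext.covariant_sequence_exact₁ _ hT x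
      (Abelian.Ext.eq_zero_of_injective (I := Injective.under N) _) rfl
    rw [Subsingleton.elim y 0, Abelian.Ext.zero_comp]

theorem aux_extend {S : Type u} [CommRing S] [Algebra R S] [Module.Flat R S]
    {N : Type u} [AddCommGroup N] [Module R N]
    (hinj : Module.Injective S
      ((ModuleCat.coextendScalars (algebraMap R S)).obj (ModuleCat.of R N)))
    {A L : Type u} [AddCommGroup A] [Module R A] [AddCommGroup L] [Module R L]
    (g : A →ₗ[R] L) (hg : Function.Injective g) (φ : S ⊗[R] A →ₗ[R] N) :
    ∃ ψ : S ⊗[R] L →ₗ[R] N, ψ ∘ₗ g.lTensor S = φ := by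
  let adj := ModuleCat.restrictCoextendScalarsAdj (algebraMap R S)
  let φ' : (ModuleCat.restrictScalars (algebraMap R S)).obj (ModuleCat.of S (S ⊗[R] A)) ⟶
      ModuleCat.of R N := ModuleCat.ofHom
    (X := (ModuleCat.restrictScalars (algebraMap R S)).obj (ModuleCat.of S (S ⊗[R] A)))
    { toFun := fun x => φ x
      map_add' := fun x y => map_add φ x y
      map_smul' := fun r (x : S ⊗[R] A) => (congrArg φ (algebraMap_smul S r x)).trans
        (φ.map_smul r x) }
  have hg' : Function.Injective (g.baseChange S) :=
    Module.Flat.lTensor_preserves_injective_linearMap (M := S) g hg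
  obtain ⟨Ψ, hΨ⟩ := hinj.out (g.baseChange S) hg' ((adj.homEquiv _ _) φ').hom
  let ψ := (adj.homEquiv (ModuleCat.of S (S ⊗[R] L)) (ModuleCat.of R N)).symm (ModuleCat.ofHom Ψ)
  have h1 : (ModuleCat.restrictScalars (algebraMap R S)).map (ModuleCat.ofHom (g.baseChange S)) ≫ ψ
      = φ' := by
    apply (adj.homEquiv _ _).injective
    rw [adj.homEquiv_naturality_left]
    refine (congrArg (fun q => ModuleCat.ofHom (g.baseChange S) ≫ q)
      (Equiv.apply_symm_apply (adj.homEquiv _ _) (ModuleCat.ofHom Ψ))).trans ?_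
    ext1
    exact LinearMap.ext hΨ
  refine ⟨{ toFun := fun x => ψ.hom x, map_add' := fun x y => map_add ψ.hom x y, map_smul' := ?_ }, ?_⟩
  · intro r x
    refine Eq.trans ?_ (ψ.hom.map_smul r x)
    exact congrArg (fun y : S ⊗[R] L => ψ.hom y) (algebraMap_smul S r x).symm
  · refine LinearMap.ext fun x => ?_
    exact congrArg (fun q => q.hom x) h1

theorem aux_iso {A B : Type u} [AddCommGroup A] [Module R A] [AddCommGroup B] [Module R B]
    (e : A ≃ₗ[R] B) (N : ModuleCat.{u} R) (n : ℕ)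
    (h : Subsingleton (Abelian.Ext (ModuleCat.of R A) N n)) :
    Subsingleton (Abelian.Ext (ModuleCat.of R B) N n) := by
  refine subsingleton_of_forall_eq 0 fun x => ?_
  have h1 : x = (Abelian.Ext.mk₀ e.toModuleIso.inv).comp
      ((Abelian.Ext.mk₀ e.toModuleIso.hom).comp x (zero_add n)) (zero_add n) := by
    rw [Abelian.Ext.mk₀_comp_mk₀_assoc, Iso.inv_hom_id, Abelian.Ext.mk₀_id_comp]
  rw [h1, Subsingleton.elim ((Abelian.Ext.mk₀ e.toModuleIso.hom).comp x (zero_add n)) 0,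
    Abelian.Ext.comp_zero]

/-- a free cover together with its kernel, with abstract kernel type -/
theorem aux_cover (M : Type u) [AddCommGroup M] [Module R M] :
    ∃ (K : Type u) (_ : AddCommGroup K) (_ : Module R K) (i : K →ₗ[R] (M →₀ R))
      (π : (M →₀ R) →ₗ[R] M),
      Function.Injective i ∧ Function.Surjective π ∧ Function.Exact i π := by
  let π : (M →₀ R) →ₗ[R] M := Finsupp.linearCombination R fun a ↦ a
  exact ⟨LinearMap.ker π, inferInstance, inferInstance, (LinearMap.ker π).subtype, π,
    (LinearMap.ker π).subtype_injective,
    Finsupp.linearCombination_surjective _ Function.surjective_id,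
    fun x => ⟨fun h => ⟨⟨x, h⟩, rfl⟩, fun ⟨y, hy⟩ => hy ▸ y.2⟩⟩

theorem aux_vanish {S : Type u} [CommRing S] [Algebra R S] [Module.Flat R S]
    {N : Type u} [AddCommGroup N] [Module R N]
    (hinj : Module.Injective S
      ((ModuleCat.coextendScalars (algebraMap R S)).obj (ModuleCat.of R N)))
    (hext : ∀ n : ℕ, 0 < n → Subsingleton (extmod R S N n)) (j : ℕ)
    (M : Type u) [AddCommGroup M] [Module R M] :
    Subsingleton (Abelian.Ext (ModuleCat.of R (S ⊗[R] M)) (ModuleCat.of R N) (j + 1)) := by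
  have hfree : ∀ (ι : Type u) (j : ℕ), Subsingleton
      (Abelian.Ext (ModuleCat.of R (S ⊗[R] (ι →₀ R))) (ModuleCat.of R N) (j + 1)) := by
    classical
    intro ι j
    have h1 := aux_coprod (R := R) (S := S) ι j (ModuleCat.of R N)
      (aux_old j (hext (j + 1) (Nat.succ_pos j)))
    exact aux_iso (TensorProduct.finsuppScalarRight R R S ι).symm _ _ h1
  induction j generalizing M with
  | zero =>
    obtain ⟨K, _, _, i, π, hi, hπ, hex0⟩ := aux_cover (R := R) M
    have hex := lTensor_exact S hex0 hπ
    have hT := aux_ses _ _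
      (Module.Flat.lTensor_preserves_injective_linearMap (M := S) _ hi)
      (LinearMap.lTensor_surjective S hπ) hex (aux_zero hex)
    refine subsingleton_of_forall_eq 0 fun x => ?_
    have := hfree M 0
    obtain ⟨y, rfl⟩ := Abelian.Ext.contravariant_sequence_exact₃ hT _ x
      (Subsingleton.elim (α := Abelian.Ext (ModuleCat.of R (S ⊗[R] (M →₀ R))) (ModuleCat.of R N) (0 + 1)) _ _)
      (show 1 + 0 = 0 + 1 from rfl)
    obtain ⟨y, rfl⟩ := (Abelian.Ext.mk₀_bijective _ _).2 y
    obtain ⟨ψ, hψ⟩ := aux_extend hinj i hi y.hom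
    have hy : y = ModuleCat.ofHom (i.lTensor S) ≫ ModuleCat.ofHom ψ := by
      ext1
      exact hψ.symm
    rw [hy, ← Abelian.Ext.mk₀_comp_mk₀]
    exact hT.extClass_comp_assoc _
  | succ j ih =>
    obtain ⟨K, _, _, i, π, hi, hπ, hex0⟩ := aux_cover (R := R) M
    have hex := lTensor_exact S hex0 hπ
    have hT := aux_ses _ _
      (Module.Flat.lTensor_preserves_injective_linearMap (M := S) _ hi)
      (LinearMap.lTensor_surjective S hπ) hex (aux_zero hex)
    refine subsingleton_of_forall_eq 0 fun x => ?_
    have := hfree M (j + 1)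
    obtain ⟨y, rfl⟩ := Abelian.Ext.contravariant_sequence_exact₃ hT _ x
      (Subsingleton.elim (α := Abelian.Ext (ModuleCat.of R (S ⊗[R] (M →₀ R))) (ModuleCat.of R N) (j + 1 + 1)) _ _)
      (add_comm 1 (j + 1))
    have := ih K
    rw [Subsingleton.elim (α := Abelian.Ext (ModuleCat.of R (S ⊗[R] K)) (ModuleCat.of R N) (j + 1)) y 0,
      Abelian.Ext.comp_zero]

theorem aux_univ_inj (S : Type u) [CommRing S] [Algebra R S] [Module.FaithfullyFlat R S]
    (C X : Type u) [AddCommGroup C] [Module R C] [AddCommGroup X] [Module R X] :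
    Function.Injective ((TensorProduct.mk R S C 1).lTensor X) := by
  have h : (TensorProduct.leftComm R X S C).toLinearMap ∘ₗ (TensorProduct.mk R S C 1).lTensor X
      = TensorProduct.mk R S (X ⊗[R] C) 1 := by
    apply TensorProduct.ext'
    intro x y
    simp
  have h2 := Module.FaithfullyFlat.tensorProduct_mk_injective (A := R) (B := S) (X ⊗[R] C)
  rw [← h, LinearMap.coe_comp] at h2
  exact h2.of_comp

theorem aux_flat_quot {C D Q : Type u} [AddCommGroup C] [Module R C] [AddCommGroup D] [Module R D]
    [AddCommGroup Q] [Module R Q] (i : C →ₗ[R] D) (p : D →ₗ[R] Q)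
    (hi : ∀ (X : Type u) [AddCommGroup X] [Module R X], Function.Injective (i.lTensor X))
    (hp : Function.Surjective p) (hex : Function.Exact i p) [Module.Flat R D] :
    Module.Flat R Q := by
  rw [Module.Flat.iff_rTensor_preserves_injective_linearMap]
  intro A B _ _ _ _ f hf
  rw [injective_iff_map_eq_zero]
  intro x hx
  obtain ⟨x', rfl⟩ := LinearMap.lTensor_surjective A hp x
  have h1 : p.lTensor B (f.rTensor D x') = 0 := by
    rw [← hx, ← LinearMap.comp_apply, ← LinearMap.comp_apply, LinearMap.lTensor_comp_rTensor,
      LinearMap.rTensor_comp_lTensor]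
  obtain ⟨b, hb⟩ := (lTensor_exact B hex hp _).1 h1
  let q := (LinearMap.range f).mkQ
  have hfq : Function.Exact f q := LinearMap.exact_map_mkQ_range f
  have hq : Function.Surjective q := Submodule.mkQ_surjective _
  have h2 : q.rTensor C b = 0 := by
    apply hi (B ⧸ LinearMap.range f)
    rw [map_zero]
    have e1 : i.lTensor _ (q.rTensor C b) = q.rTensor D (i.lTensor B b) := by
      rw [← LinearMap.comp_apply, ← LinearMap.comp_apply, LinearMap.lTensor_comp_rTensor,
        LinearMap.rTensor_comp_lTensor]
    rw [e1, hb]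
    exact (rTensor_exact D hfq hq).apply_apply_eq_zero x'
  obtain ⟨a, rfl⟩ := (rTensor_exact C hfq hq _).1 h2
  have h3 : i.lTensor A a = x' := by
    apply Module.Flat.rTensor_preserves_injective_linearMap (M := D) f hf
    rw [← hb, ← LinearMap.comp_apply, ← LinearMap.comp_apply, LinearMap.lTensor_comp_rTensor,
      LinearMap.rTensor_comp_lTensor]
  rw [← h3]
  exact (lTensor_exact A hex hp).apply_apply_eq_zero a

theorem aux_flat_ker {K P Z : Type u} [AddCommGroup K] [Module R K]
    [AddCommGroup P] [Module R P] [AddCommGroup Z] [Module R Z]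
    [Module.Flat R P] [Module.Flat R Z] (i : K →ₗ[R] P) (p : P →ₗ[R] Z)
    (hi : Function.Injective i) (hp : Function.Surjective p) (hex : Function.Exact i p) :
    Module.Flat R K := by
  rw [Module.Flat.iff_rTensor_preserves_injective_linearMap]
  intro A B _ _ _ _ f hf
  have h1 := LinearMap.lTensor_injective_of_exact_of_flat p hp i hi hex A
  have h2 := Module.Flat.rTensor_preserves_injective_linearMap (M := P) f hf
  have h3 := h2.comp h1
  rw [← LinearMap.coe_comp, LinearMap.rTensor_comp_lTensor, ← LinearMap.lTensor_comp_rTensor,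
    LinearMap.coe_comp] at h3
  exact h3.of_comp

/-- The iterated cokernels `C₀ = R`, `C_{k+1} = (S ⊗ C_k) / C_k`. -/
noncomputable def auxTower (R : Type u) [CommRing R] (S : Type u) [CommRing S] [Algebra R S] :
    ℕ → ModuleCat.{u} R
  | 0 => ModuleCat.of R R
  | k + 1 => ModuleCat.of R
      ((S ⊗[R] (auxTower R S k)) ⧸ LinearMap.range (TensorProduct.mk R S (auxTower R S k) 1))

/-- The projection `S ⊗ C_k → C_{k+1}`. -/
noncomputable def auxProj (R : Type u) [CommRing R] (S : Type u) [CommRing S] [Algebra R S]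
    (k : ℕ) : (S ⊗[R] (auxTower R S k)) →ₗ[R] (auxTower R S (k + 1)) :=
  (LinearMap.range (TensorProduct.mk R S (auxTower R S k) 1)).mkQ

theorem auxProj_surj (S : Type u) [CommRing S] [Algebra R S] (k : ℕ) :
    Function.Surjective (auxProj R S k) := Submodule.mkQ_surjective _

theorem auxProj_exact (S : Type u) [CommRing S] [Algebra R S] (k : ℕ) :
    Function.Exact (TensorProduct.mk R S (auxTower R S k) 1) (auxProj R S k) :=
  LinearMap.exact_map_mkQ_range _

theorem auxTower_flat (S : Type u) [CommRing S] [Algebra R S] [Module.FaithfullyFlat R S] (k : ℕ) :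
    Module.Flat R (auxTower R S k) := by
  induction k with
  | zero => exact inferInstanceAs (Module.Flat R R)
  | succ k ih =>
    exact aux_flat_quot _ _ (fun X _ _ => aux_univ_inj S _ X) (auxProj_surj S k) (auxProj_exact S k)

theorem auxTower_dim (S : Type u) [CommRing S] [Algebra R S] [Module.FaithfullyFlat R S]
    (hpd : ∀ (F : Type u) [AddCommGroup F] [Module R F], Module.Flat R F →
      ∃ n : ℕ, projResBddAbove R (ModuleCat.of R F) n) :
    ∃ n : ℕ, ∀ k, HasProjectiveDimensionLT (auxTower R S k) n := by
  have := auxTower_flat (R := R) S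
  obtain ⟨n, hn⟩ := hpd (DirectSum (ULift.{u} ℕ) fun k => auxTower R S k.down) inferInstance
  have := aux_hpd hn
  classical
  refine ⟨n + 1, fun k => ?_⟩
  let r : Retract (auxTower R S k)
      (ModuleCat.of R (DirectSum (ULift.{u} ℕ) fun k => auxTower R S k.down)) :=
    { i := ModuleCat.ofHom (DirectSum.lof R (ULift.{u} ℕ) (fun k => auxTower R S k.down) ⟨k⟩)
      r := ModuleCat.ofHom (DirectSum.component R (ULift.{u} ℕ) (fun k => auxTower R S k.down) ⟨k⟩)
      retract := by
        ext x
        exact DirectSum.component.lof_self R (M := fun k : ULift.{u} ℕ => auxTower R S k.down) ⟨k⟩ x }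
  exact r.hasProjectiveDimensionLT _

/-- the exact sequence `0 → M ⊗ C_k → M ⊗ (S ⊗ C_k) → M ⊗ C_{k+1} → 0` -/
theorem auxTower_ses (S : Type u) [CommRing S] [Algebra R S] [Module.FaithfullyFlat R S]
    (M : Type u) [AddCommGroup M] [Module R M] (k : ℕ) :
    (ShortComplex.mk (ModuleCat.ofHom ((TensorProduct.mk R S (auxTower R S k) 1).lTensor M))
      (ModuleCat.ofHom ((auxProj R S k).lTensor M))
      (aux_zero (lTensor_exact M (auxProj_exact S k) (auxProj_surj S k)))).ShortExact :=
  aux_ses _ _ (aux_univ_inj S _ M) (LinearMap.lTensor_surjective M (auxProj_surj S k))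
    (lTensor_exact M (auxProj_exact S k) (auxProj_surj S k)) _

theorem aux_main (S : Type u) [CommRing S] [Algebra R S] [Module.FaithfullyFlat R S]
    (M : Type u) [AddCommGroup M] [Module R M] (N : ModuleCat.{u} R)
    (hv : ∀ (j k : ℕ), Subsingleton
      (Abelian.Ext (ModuleCat.of R (M ⊗[R] (S ⊗[R] (auxTower R S k)))) N (j + 1)))
    (n : ℕ) (Z : Type u) [AddCommGroup Z] [Module R Z] [Module.Flat R Z]
    (hZ : HasProjectiveDimensionLT (ModuleCat.of R Z) (n + 1)) (k j : ℕ) (hk : n ≤ k) (hj : n ≤ j)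
    (f : Z →ₗ[R] auxTower R S (k + 1))
    (x : Abelian.Ext (ModuleCat.of R (M ⊗[R] (auxTower R S (k + 1)))) N (j + 1)) :
    (Abelian.Ext.mk₀ (ModuleCat.ofHom (f.lTensor M))).comp x (zero_add (j + 1)) = 0 := by
  have hv' := hv j k
  have hgx : (Abelian.Ext.mk₀ (ModuleCat.ofHom ((auxProj R S k).lTensor M))).comp x
      (zero_add (j + 1)) = 0 := Subsingleton.elim _ _
  induction n generalizing Z k j with
  | zero =>
    have hp : Projective (ModuleCat.of R Z) := projective_iff_hasProjectiveDimensionLT_one.2 hZ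
    have hp' : Module.Projective R Z := (IsProjective.iff_projective Z).2 hp
    obtain ⟨h, rfl⟩ := Module.projective_lifting_property (auxProj R S k) f (auxProj_surj S k)
    rw [LinearMap.lTensor_comp, ModuleCat.ofHom_comp, ← Abelian.Ext.mk₀_comp_mk₀_assoc, hgx,
      Abelian.Ext.comp_zero]
  | succ n ih =>
    obtain _ | k := k
    · omega
    obtain _ | j := j
    · omega
    obtain ⟨K, _, _, i, π, hi, hπ, hex⟩ := aux_cover (R := R) Z
    have hfl := aux_flat_ker i π hi hπ hex
    have hK : HasProjectiveDimensionLT (ModuleCat.of R K) (n + 1) := by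
      have hs := aux_ses _ _ hi hπ hex (aux_zero hex)
      have hP : Projective (ModuleCat.of R (Z →₀ R)) :=
        (IsProjective.iff_projective (R := R) (Z →₀ R)).1 inferInstance
      exact hs.hasProjectiveDimensionLT_X₁ (n + 1) (hasProjectiveDimensionLT_of_ge _ 1 _ (by omega)) hZ
    -- lift `f ∘ π` to `h : P → S ⊗ C_{k+1}`
    obtain ⟨h, hh⟩ := Module.projective_lifting_property (auxProj R S (k + 1)) (f ∘ₗ π)
      (auxProj_surj S (k + 1))
    -- restrict to the kernels
    have hinj1 := Module.FaithfullyFlat.tensorProduct_mk_injective (A := R) (B := S)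
      (auxTower R S (k + 1))
    have hr : ∀ z : K, (h ∘ₗ i) z ∈
        LinearMap.range (TensorProduct.mk R S (auxTower R S (k + 1)) 1) := by
      intro z
      refine (auxProj_exact S (k + 1) _).1 ?_
      have h2 : auxProj R S (k + 1) (h (i z)) = f (π (i z)) := LinearMap.congr_fun hh (i z)
      have h3 : π (i z) = 0 := hex.apply_apply_eq_zero z
      rw [h3, map_zero] at h2
      exact h2
    let f' : K →ₗ[R] auxTower R S (k + 1) :=
      (LinearEquiv.ofInjective _ hinj1).symm.toLinearMap ∘ₗ
        LinearMap.codRestrict _ (h ∘ₗ i) hr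
    have hf' : (TensorProduct.mk R S (auxTower R S (k + 1)) 1) ∘ₗ f' =
        h ∘ₗ i := by
      refine LinearMap.ext fun z => ?_
      have := LinearEquiv.apply_symm_apply (LinearEquiv.ofInjective _ hinj1)
        (LinearMap.codRestrict _ (h ∘ₗ i) hr z)
      exact congrArg Subtype.val this
    have hexM := lTensor_exact M hex hπ
    have h₁ := aux_ses _ _ (LinearMap.lTensor_injective_of_exact_of_flat π hπ _
      hi hex M) (LinearMap.lTensor_surjective M hπ) hexM (aux_zero hexM)
    have h₂ := auxTower_ses (R := R) S M (k + 1)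
    obtain ⟨y, rfl⟩ := Abelian.Ext.contravariant_sequence_exact₃ h₂ N x hgx (add_comm 1 (j + 1))
    have hv'' := hv j k
    have hy := ih K hK k j (by omega) (by omega) f' y hv'' (Subsingleton.elim _ _)
    have hnat := ShortComplex.ShortExact.extClass_naturality h₁ h₂
      { τ₁ := ModuleCat.ofHom (f'.lTensor M)
        τ₂ := ModuleCat.ofHom (h.lTensor M)
        τ₃ := ModuleCat.ofHom (f.lTensor M)
        comm₁₂ := by
          change ModuleCat.ofHom _ ≫ ModuleCat.ofHom _ = ModuleCat.ofHom _ ≫ ModuleCat.ofHom _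
          rw [← ModuleCat.ofHom_comp, ← ModuleCat.ofHom_comp, ← LinearMap.lTensor_comp,
            ← LinearMap.lTensor_comp, hf']
        comm₂₃ := by
          change ModuleCat.ofHom _ ≫ ModuleCat.ofHom _ = ModuleCat.ofHom _ ≫ ModuleCat.ofHom _
          rw [← ModuleCat.ofHom_comp, ← ModuleCat.ofHom_comp, ← LinearMap.lTensor_comp,
            ← LinearMap.lTensor_comp, hh] }
    dsimp only at hnat hy ⊢
    have e1 := Abelian.Ext.comp_assoc (Abelian.Ext.mk₀ (ModuleCat.ofHom (f.lTensor M))) h₂.extClass y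
      (zero_add 1) (add_comm 1 (j + 1)) (by omega : 0 + 1 + (j + 1) = j + 1 + 1)
    have e2 := Abelian.Ext.comp_assoc h₁.extClass (Abelian.Ext.mk₀ (ModuleCat.ofHom (f'.lTensor M))) y
      (add_zero 1) (zero_add (j + 1)) (by omega : 1 + 0 + (j + 1) = j + 1 + 1)
    refine e1.symm.trans ?_
    rw [← hnat]
    refine e2.trans ?_
    rw [hy, Abelian.Ext.comp_zero]
end

/-- **Main Theorem.** Let `R` be a commutative noetherian ring over which every flat
`R`-module has finite projective dimension, let `S` be a faithfully flat (commutative)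
`R`-algebra, and let `N` be an `R`-module.  If `Hom_R(S,N)` (with its `S`-module structure
through the first variable, i.e. the coextension of scalars of `N`) is an injective
`S`-module and `Ext_R^n(S,N) = 0` for all `n > 0`, then `N` is an injective `R`-module. -/
theorem injective_of_homS_injective_of_ext_vanishing
    (R : Type u) [CommRing R] [IsNoetherianRing R]
    (S : Type u) [CommRing S] [Algebra R S] [Module.FaithfullyFlat R S]
    (hpd : ∀ (F : Type u) [AddCommGroup F] [Module R F], Module.Flat R F →
      ∃ n : ℕ, projResBddAbove R (ModuleCat.of R F) n)
    (N : Type u) [AddCommGroup N] [Module R N]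
    (hinj : Module.Injective S
      ((ModuleCat.coextendScalars (algebraMap R S)).obj (ModuleCat.of R N)))
    (hext : ∀ n : ℕ, 0 < n → Subsingleton (extmod R S N n)) :
    Module.Injective R N := by
  have hv : ∀ (M : Type u) [AddCommGroup M] [Module R M] (j k : ℕ), Subsingleton
      (Abelian.Ext (ModuleCat.of R (TensorProduct R M (TensorProduct R S (auxTower R S k))))
        (ModuleCat.of R N) (j + 1)) := fun M _ _ j k =>
    aux_iso (TensorProduct.leftComm R S M (auxTower R S k)) _ _ (aux_vanish hinj hext j _)
  obtain ⟨n, hn⟩ := auxTower_dim (R := R) S hpd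
  have hfl := auxTower_flat (R := R) S
  -- vanishing high up in the tower
  have htop : ∀ (M : Type u) [AddCommGroup M] [Module R M] (j : ℕ), n ≤ j → Subsingleton
      (Abelian.Ext (ModuleCat.of R (TensorProduct R M (auxTower R S (n + 1))))
        (ModuleCat.of R N) (j + 1)) := by
    intro M _ _ j hj
    refine subsingleton_of_forall_eq 0 fun x => ?_
    have h1 : HasProjectiveDimensionLT (ModuleCat.of R (auxTower R S (n + 1))) (n + 1) :=
      have := hn (n + 1)
      hasProjectiveDimensionLT_of_ge (auxTower R S (n + 1)) n (n + 1) (by omega)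
    have h2 := aux_main S M (ModuleCat.of R N) (hv M) n (auxTower R S (n + 1)) h1 n j le_rfl hj
      LinearMap.id x
    rw [LinearMap.lTensor_id, ModuleCat.ofHom_id, Abelian.Ext.mk₀_id_comp] at h2
    exact h2
  -- descend along the tower
  have hdesc : ∀ (m k : ℕ), k + m = n + 1 → ∀ (M : Type u) [AddCommGroup M] [Module R M],
      Subsingleton (Abelian.Ext (ModuleCat.of R (TensorProduct R M (auxTower R S k)))
        (ModuleCat.of R N) (k + 1)) := by
    intro m
    induction m with
    | zero =>
      rintro k rfl M _ _
      exact htop M (n + 1) (by omega)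
    | succ m ih =>
      intro k hk M _ _
      refine subsingleton_of_forall_eq 0 fun x => ?_
      have h3 := ih (k + 1) (by omega) M
      have h4 := hv M k k
      obtain ⟨y, rfl⟩ := Abelian.Ext.contravariant_sequence_exact₁ (auxTower_ses (R := R) S M k) _ x
        (add_comm 1 (k + 1)) (Subsingleton.elim (α := Abelian.Ext (ModuleCat.of R
          (TensorProduct R M (auxTower R S (k + 1)))) (ModuleCat.of R N) (k + 1 + 1)) _ _)
      rw [Subsingleton.elim (α := Abelian.Ext (ModuleCat.of R (TensorProduct R M
        (TensorProduct R S (auxTower R S k)))) (ModuleCat.of R N) (k + 1)) y 0,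
        Abelian.Ext.comp_zero]
  have hfin : Injective (ModuleCat.of R N) := by
    rw [injective_iff_subsingleton_ext_one]
    intro M
    exact aux_iso (TensorProduct.rid R M) _ _ (hdesc (n + 1) 0 (by omega) M)
  exact Module.injective_module_of_injective_object R N
end

section
/- Let R be a commutative noetherian ring over which every flat R-module has finite projective dimension, and let S be a faithfully flat R-algebra. For an R-module N the following conditions are equivalent: (i) N is injective; (ii) Hom_R(S,N) is an injective R-module and Ext_R^n(S,N) = 0 for all n > 0; (iii) Hom_R(S,N) is an injective S-module and Ext_R^n(S,N) = 0 for all n > 0. -/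
/-!
Common definitions: `extmod R M N n` is the `n`-th Ext module `Ext_R^n(M,N)`.
-/

open CategoryTheory

universe u

theorem link (R : Type u) [CommRing R] (M N : Type u) [AddCommGroup M] [Module R M]
    [AddCommGroup N] [Module R N] (n : ℕ) :
    Subsingleton (extmod R M N (n+1)) ↔
      Subsingleton (Abelian.Ext (ModuleCat.of R M) (ModuleCat.of R N) (n+1)) := by
  let P := projectiveResolution (ModuleCat.of R M)
  have h1 : Subsingleton (extmod R M N (n+1)) ↔
      ∀ f : P.complex.X (n+1) ⟶ ModuleCat.of R N, P.complex.d (n+2) (n+1) ≫ f = 0 →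
        ∃ g : P.complex.X n ⟶ ModuleCat.of R N, P.complex.d (n+1) n ≫ g = f := by
    rw [← ModuleCat.isZero_iff_subsingleton]
    have e := P.isoExt (R := R) (n+1) (ModuleCat.of R N)
    refine e.isZero_iff.trans ?_
    rw [← HomologicalComplex.exactAt_iff_isZero_homology,
      HomologicalComplex.exactAt_iff' _ n (n+1) (n+2) (by simp) (by simp),
      ShortComplex.moduleCat_exact_iff]
    rfl
  rw [h1]
  constructor
  · intro h
    refine subsingleton_of_forall_eq 0 fun x => ?_
    obtain ⟨f, hf, rfl⟩ := P.extMk_surjective x (n+2) rfl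
    rw [P.extMk_eq_zero_iff f (n+2) rfl hf n rfl]
    exact h f hf
  · intro h f hf
    have := Subsingleton.elim (P.extMk f (n+2) rfl hf) 0
    rwa [P.extMk_eq_zero_iff f (n+2) rfl hf n rfl] at this

variable {R : Type u} [CommRing R]

theorem ext_X3 {S : ShortComplex (ModuleCat.{u} R)} (hS : S.ShortExact) (N : ModuleCat.{u} R) (n : ℕ)
    (h1 : Subsingleton (Abelian.Ext S.X₁ N n)) (h2 : Subsingleton (Abelian.Ext S.X₂ N (n+1))) :
    Subsingleton (Abelian.Ext S.X₃ N (n+1)) := by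
  refine subsingleton_of_forall_eq 0 fun x => ?_
  obtain ⟨y, rfl⟩ := Abelian.Ext.contravariant_sequence_exact₃ hS N x (Subsingleton.elim _ _)
    (n₀ := n) (add_comm _ _)
  rw [Subsingleton.elim y 0, Abelian.Ext.comp_zero]

theorem ext_X1 {S : ShortComplex (ModuleCat.{u} R)} (hS : S.ShortExact) (N : ModuleCat.{u} R) (n : ℕ)
    (h1 : Subsingleton (Abelian.Ext S.X₂ N n)) (h2 : Subsingleton (Abelian.Ext S.X₃ N (n+1))) :
    Subsingleton (Abelian.Ext S.X₁ N n) := by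
  refine subsingleton_of_forall_eq 0 fun x => ?_
  obtain ⟨y, rfl⟩ := Abelian.Ext.contravariant_sequence_exact₁ hS N x (n₁ := n + 1) (add_comm _ _)
    (Subsingleton.elim _ _)
  rw [Subsingleton.elim y 0, Abelian.Ext.comp_zero]

theorem ext_X2 {S : ShortComplex (ModuleCat.{u} R)} (hS : S.ShortExact) (N : ModuleCat.{u} R) (n : ℕ)
    (h1 : Subsingleton (Abelian.Ext S.X₁ N n)) (h2 : Subsingleton (Abelian.Ext S.X₃ N n)) :
    Subsingleton (Abelian.Ext S.X₂ N n) := by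
  refine subsingleton_of_forall_eq 0 fun x => ?_
  obtain ⟨y, rfl⟩ := Abelian.Ext.contravariant_sequence_exact₂ hS N x (Subsingleton.elim _ _)
  rw [Subsingleton.elim y 0, Abelian.Ext.comp_zero]

/-- If every map from the kernel extends and the middle `Ext^1` vanishes, so does the last. -/
theorem ext_one_of_extend {S : ShortComplex (ModuleCat.{u} R)} (hS : S.ShortExact)
    (N : ModuleCat.{u} R) (h : ∀ f : S.X₁ ⟶ N, ∃ g : S.X₂ ⟶ N, S.f ≫ g = f)
    (h2 : Subsingleton (Abelian.Ext S.X₂ N 1)) :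
    Subsingleton (Abelian.Ext S.X₃ N 1) := by
  refine subsingleton_of_forall_eq 0 fun x => ?_
  obtain ⟨y, rfl⟩ := Abelian.Ext.contravariant_sequence_exact₃ hS N x (Subsingleton.elim _ _)
    (n₀ := 0) (add_comm _ _)
  obtain ⟨f, rfl⟩ := Abelian.Ext.addEquiv₀.symm.surjective y
  obtain ⟨g, rfl⟩ := h f
  simp [← Abelian.Ext.mk₀_comp_mk₀]

theorem extend_of_ext_one {S : ShortComplex (ModuleCat.{u} R)} (hS : S.ShortExact)
    (N : ModuleCat.{u} R) (h2 : Subsingleton (Abelian.Ext S.X₃ N 1)) 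
    (f : S.X₁ ⟶ N) : ∃ g : S.X₂ ⟶ N, S.f ≫ g = f := by
  obtain ⟨y, hy⟩ := Abelian.Ext.contravariant_sequence_exact₁ hS N (Abelian.Ext.mk₀ f) (n₁ := 1)
    (add_comm _ _) (Subsingleton.elim _ _)
  obtain ⟨g, rfl⟩ := Abelian.Ext.addEquiv₀.symm.surjective y
  refine ⟨g, ?_⟩
  apply Abelian.Ext.addEquiv₀.symm.injective
  simpa using hy

/-- Dimension shifting in the second variable. -/
theorem ext_shift {S : ShortComplex (ModuleCat.{u} R)} (hS : S.ShortExact)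
    [Injective S.X₂] (X : ModuleCat.{u} R) (n : ℕ) :
    Subsingleton (Abelian.Ext X S.X₃ (n+1)) ↔ Subsingleton (Abelian.Ext X S.X₁ (n+2)) := by
  have := fun n => Abelian.Ext.subsingleton_of_injective X S.X₂ n
  constructor
  · intro h
    refine subsingleton_of_forall_eq 0 fun x => ?_
    obtain ⟨y, rfl⟩ := Abelian.Ext.covariant_sequence_exact₁ X hS x (n₀ := n+1)
      (Subsingleton.elim _ _) rfl
    rw [Subsingleton.elim y 0, Abelian.Ext.zero_comp]
  · intro h
    refine subsingleton_of_forall_eq 0 fun x => ?_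
    obtain ⟨y, rfl⟩ := Abelian.Ext.covariant_sequence_exact₃ X hS x (n₁ := n+2)
       rfl (Subsingleton.elim _ _)
    rw [Subsingleton.elim y 0, Abelian.Ext.zero_comp]

theorem ext_retract {X Y N : ModuleCat.{u} R} (r : Retract X Y) (n : ℕ)
    (h : Subsingleton (Abelian.Ext Y N n)) : Subsingleton (Abelian.Ext X N n) := by
  refine subsingleton_of_forall_eq 0 fun x => ?_
  have : x = (Abelian.Ext.mk₀ r.i).comp ((Abelian.Ext.mk₀ r.r).comp x (zero_add n)) (zero_add n) := by
    simp
  rw [this, Subsingleton.elim ((Abelian.Ext.mk₀ r.r).comp x (zero_add n)) 0, Abelian.Ext.comp_zero]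

theorem exists_inj_ses (N : ModuleCat.{u} R) :
    ∃ S : ShortComplex (ModuleCat.{u} R), S.ShortExact ∧ S.X₁ = N ∧ Injective S.X₂ :=
  ⟨.mk (Injective.ι N) (Limits.cokernel.π _) (Limits.cokernel.condition _),
    { exact := ShortComplex.exact_cokernel _ }, rfl, inferInstanceAs (Injective (Injective.under N))⟩

/-- Relative Baer criterion -/
theorem baer_rel {K P N : Type u} [AddCommGroup K] [Module R K] [AddCommGroup P] [Module R P]
    [AddCommGroup N] [Module R N] (i : K →ₗ[R] P) (hi : Function.Injective i) (f : K →ₗ[R] N)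
    (h : ∀ (y : P) (I : Ideal R), (∀ r : R, r • y ∈ LinearMap.range i → r ∈ I) →
      ∀ g : I →ₗ[R] N, ∃ g' : R →ₗ[R] N, ∀ (x : R) (hx : x ∈ I), g' x = g ⟨x, hx⟩) :
    ∃ g : P →ₗ[R] N, g ∘ₗ i = f := by
  have : Fact (Function.Injective i) := ⟨hi⟩
  have key : (Module.Baer.extensionOfMax i f).domain = ⊤ := by
    refine Submodule.eq_top_iff'.mpr fun y => ?_
    obtain ⟨g', hg'⟩ := h y (Module.Baer.ExtensionOfMaxAdjoin.ideal i f y)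
      (fun r hr => (Module.Baer.extensionOfMax i f).le hr)
      (Module.Baer.ExtensionOfMaxAdjoin.idealTo i f y)
    set F := (Module.Baer.extensionOfMax i f) with hF
    have hval : ∀ (c : R) (hc : c • y ∈ F.domain), g' c = F.toLinearPMap ⟨c • y, hc⟩ :=
      fun c hc => hg' c hc
    have hlin : ∀ c : R, c • g' 1 = g' c := fun c => by rw [← map_smul]; simp
    have H : ∀ c : R, c • y = 0 → c • g' 1 = 0 := fun c hc => by
      rw [hlin, hval c (by rw [hc]; exact zero_mem _)]
      convert F.toLinearPMap.map_zero
      simpa using hc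
    let G : P →ₗ.[R] N := LinearPMap.mkSpanSingleton' y (g' 1) H
    have hFG : ∀ (x : F.toLinearPMap.domain) (z : G.domain), (x : P) = z →
        F.toLinearPMap x = G z := by
      rintro ⟨x, hx⟩ ⟨z, hz⟩ (rfl : x = z)
      obtain ⟨c, rfl⟩ := Submodule.mem_span_singleton.mp hz
      rw [LinearPMap.mkSpanSingleton'_apply, hlin]
      exact (hval c hx).symm
    let F' : Module.Baer.ExtensionOf i f :=
      { F.toLinearPMap.sup G hFG with
        le := F.le.trans (LinearPMap.left_le_sup _ _ hFG).1
        is_extension := fun m => (F.is_extension m).trans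
          ((LinearPMap.left_le_sup _ _ hFG).2 rfl) }
    have hmax := Module.Baer.extensionOfMax_is_max i f F' (LinearPMap.left_le_sup _ _ hFG)
    have hy : y ∈ F'.domain := (LinearPMap.right_le_sup _ _ hFG).1
      (Submodule.mem_span_singleton_self y)
    rw [hmax] at hy
    exact hy
  refine ⟨(Module.Baer.extensionOfMax i f).toLinearPMap.toFun ∘ₗ
    (LinearEquiv.ofTop _ key).symm.toLinearMap, ?_⟩
  ext x
  exact ((Module.Baer.extensionOfMax i f).is_extension x).symm

theorem ses_mk {K P M : Type u} [AddCommGroup K] [Module R K] [AddCommGroup P] [Module R P]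
    [AddCommGroup M] [Module R M] (i : K →ₗ[R] P) (q : P →ₗ[R] M) (hi : Function.Injective i)
    (hq : Function.Surjective q) (he : Function.Exact i q) :
    (ShortComplex.mk (ModuleCat.ofHom i) (ModuleCat.ofHom q)
      (by rw [← ModuleCat.ofHom_comp, he.linearMap_comp_eq_zero]; rfl)).ShortExact where
  exact := by
    rw [ShortComplex.ShortExact.moduleCat_exact_iff_function_exact]
    exact he
  mono_f := (ModuleCat.mono_iff_injective _).mpr hi
  epi_g := (ModuleCat.epi_iff_surjective _).mpr hq

/-- vanishing of a single Ext -/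
abbrev VExt (R : Type u) [CommRing R] (X : Type u) [AddCommGroup X] [Module R X]
    (N : ModuleCat.{u} R) (n : ℕ) : Prop :=
  Subsingleton (Abelian.Ext (ModuleCat.of R X) N n)

theorem VExt.extend_ideal {I : Ideal R} {N : ModuleCat.{u} R} (h : VExt R (R ⧸ I) N 1)
    (g : I →ₗ[R] N) : ∃ g' : R →ₗ[R] N, ∀ (x : R) (hx : x ∈ I), g' x = g ⟨x, hx⟩ := by
  obtain ⟨k, hk⟩ := extend_of_ext_one (ses_mk I.subtype (Submodule.mkQ I) I.injective_subtype
    (Submodule.mkQ_surjective I) (LinearMap.exact_subtype_mkQ I)) N h (ModuleCat.ofHom g)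
  refine ⟨k.hom, fun x hx => ?_⟩
  exact LinearMap.congr_fun (congrArg ModuleCat.Hom.hom hk) ⟨x, hx⟩

theorem VExt.of_free {X : Type u} [AddCommGroup X] [Module R X] [Module.Free R X]
    (N : ModuleCat.{u} R) (n : ℕ) : VExt R X N (n+1) := by
  have : Projective (ModuleCat.of R X) := ModuleCat.projective_of_free (Module.Free.chooseBasis R X)
  exact Abelian.Ext.subsingleton_of_projective _ _ _

theorem VExt.retract {X Y : Type u} [AddCommGroup X] [Module R X] [AddCommGroup Y] [Module R Y]
    (f : X →ₗ[R] Y) (g : Y →ₗ[R] X) (h : g ∘ₗ f = LinearMap.id)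
    {N : ModuleCat.{u} R} {n : ℕ} (hY : VExt R Y N n) : VExt R X N n :=
  ext_retract (X := ModuleCat.of R X) (Y := ModuleCat.of R Y)
    ⟨ModuleCat.ofHom f, ModuleCat.ofHom g, by rw [← ModuleCat.ofHom_comp, h]; rfl⟩ n hY

theorem VExt.filt (n : ℕ) : ∀ (N : ModuleCat.{u} R) (M : Type u) [AddCommGroup M] [Module R M]
    (_ : ∀ (y : M) (I : Ideal R), (∀ r : R, r • y = 0 → r ∈ I) → VExt R (R ⧸ I) N (n+1)),
    VExt R M N (n+1) := by
  induction n with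
  | zero =>
    intro N M _ _ h
    let q : (M →₀ R) →ₗ[R] M := Finsupp.linearCombination R id
    have hq : Function.Surjective q := Finsupp.linearCombination_id_surjective R M
    have hs := ses_mk (K := q.ker) (P := M →₀ R) q.ker.subtype q q.ker.injective_subtype hq
      (LinearMap.exact_subtype_ker_map q)
    refine ext_one_of_extend hs N (fun f => ?_) (VExt.of_free _ _)
    obtain ⟨g, hg⟩ := baer_rel q.ker.subtype q.ker.injective_subtype f.hom (fun y I hI =>
      (h (q y) I fun r hr => hI r (by simpa using hr)).extend_ideal)
    exact ⟨ModuleCat.ofHom g, by ext1; exact hg⟩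
  | succ n ih =>
    intro N M _ _ h
    obtain ⟨S, hS, rfl, hinj⟩ := exists_inj_ses N
    refine (ext_shift hS _ n).mp (ih S.X₃ M fun y I hI => ?_)
    exact (ext_shift hS _ n).mpr (h y I hI)

theorem ext_one_iff_lift {S : ShortComplex (ModuleCat.{u} R)} (hS : S.ShortExact)
    [Injective S.X₂] (X : ModuleCat.{u} R) :
    Subsingleton (Abelian.Ext X S.X₁ 1) ↔ ∀ f : X ⟶ S.X₃, ∃ g : X ⟶ S.X₂, g ≫ S.g = f := by
  have := fun n => Abelian.Ext.subsingleton_of_injective X S.X₂ n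
  constructor
  · intro h f
    obtain ⟨y, hy⟩ := Abelian.Ext.covariant_sequence_exact₃ X hS (Abelian.Ext.mk₀ f) (n₁ := 1)
      rfl (Subsingleton.elim _ _)
    obtain ⟨g, rfl⟩ := Abelian.Ext.addEquiv₀.symm.surjective y
    refine ⟨g, ?_⟩
    apply Abelian.Ext.addEquiv₀.symm.injective
    simpa using hy
  · intro h
    refine subsingleton_of_forall_eq 0 fun x => ?_
    obtain ⟨y, rfl⟩ := Abelian.Ext.covariant_sequence_exact₁ X hS x (n₀ := 0)
      (Subsingleton.elim _ _) rfl
    obtain ⟨f, rfl⟩ := Abelian.Ext.addEquiv₀.symm.surjective y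
    obtain ⟨g, rfl⟩ := h f
    simp [← Abelian.Ext.mk₀_comp_mk₀]

theorem VExt.finsupp (n : ℕ) : ∀ (N : ModuleCat.{u} R) (ι X : Type u) [AddCommGroup X] [Module R X]
    (_ : VExt R X N (n+1)), VExt R (ι →₀ X) N (n+1) := by
  induction n with
  | zero =>
    intro N ι X _ _ h
    obtain ⟨S, hS, rfl, hinj⟩ := exists_inj_ses N
    refine (ext_one_iff_lift hS _).mpr fun f => ?_
    have h' := (ext_one_iff_lift hS _).mp h
    choose g hg using fun i : ι => h' (ModuleCat.ofHom (f.hom ∘ₗ Finsupp.lsingle i))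
    refine ⟨ModuleCat.ofHom (Finsupp.lsum R fun i => (g i).hom), ?_⟩
    ext1
    refine Finsupp.lhom_ext' fun i => ?_
    ext x
    have := LinearMap.congr_fun (congrArg ModuleCat.Hom.hom (hg i)) x
    simpa using this
  | succ n ih =>
    intro N ι X _ _ h
    obtain ⟨S, hS, rfl, hinj⟩ := exists_inj_ses N
    exact (ext_shift hS _ n).mp (ih S.X₃ ι X ((ext_shift hS _ n).mpr h))

open TensorProduct in
theorem VExt.tens_free (S : Type u) [AddCommGroup S] [Module R S] (N : ModuleCat.{u} R) (n : ℕ)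
    (h : VExt R S N (n+1)) (ι : Type u) : VExt R ((ι →₀ R) ⊗[R] S) N (n+1) := by
  classical
  exact (VExt.finsupp n N ι S h).retract (TensorProduct.finsuppScalarLeft R S ι).toLinearMap
    (TensorProduct.finsuppScalarLeft R S ι).symm.toLinearMap
    (LinearMap.ext fun x => (TensorProduct.finsuppScalarLeft R S ι).symm_apply_apply x)

open TensorProduct in
theorem VExt.tens_zero (S : Type u) [AddCommGroup S] [Module R S] [Module.Flat R S]
    (N : Type u) [AddCommGroup N] [Module R N] (hinj : Module.Injective R (S →ₗ[R] N))
    {K P M : Type u} [AddCommGroup K] [Module R K] [AddCommGroup P] [Module R P]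
    [AddCommGroup M] [Module R M] (i : K →ₗ[R] P) (q : P →ₗ[R] M) (hi : Function.Injective i)
    (hq : Function.Surjective q) (he : Function.Exact i q)
    (hP : VExt R (P ⊗[R] S) (ModuleCat.of R N) 1) : VExt R (M ⊗[R] S) (ModuleCat.of R N) 1 := by
  have hs := ses_mk (i.rTensor S) (q.rTensor S)
    (Module.Flat.rTensor_preserves_injective_linearMap _ hi)
    (LinearMap.rTensor_surjective _ hq) (rTensor_exact S he hq)
  refine ext_one_of_extend hs _ (fun f => ?_) hP
  obtain ⟨g, hg⟩ := (Module.Baer.of_injective hinj).extension_property i hi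
    (TensorProduct.curry f.hom)
  refine ⟨ModuleCat.ofHom (TensorProduct.lift g), ?_⟩
  ext1
  refine TensorProduct.ext' fun x s => ?_
  exact LinearMap.congr_fun (LinearMap.congr_fun hg x) s

open TensorProduct in
theorem VExt.tens_succ (S : Type u) [AddCommGroup S] [Module R S] [Module.Flat R S]
    (N : ModuleCat.{u} R) (n : ℕ)
    {K P M : Type u} [AddCommGroup K] [Module R K] [AddCommGroup P] [Module R P]
    [AddCommGroup M] [Module R M] (i : K →ₗ[R] P) (q : P →ₗ[R] M) (hi : Function.Injective i)
    (hq : Function.Surjective q) (he : Function.Exact i q)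
    (hK : VExt R (K ⊗[R] S) N (n+1))
    (hP : VExt R (P ⊗[R] S) N (n+1+1)) : VExt R (M ⊗[R] S) N (n+1+1) := by
  have hs := ses_mk (i.rTensor S) (q.rTensor S)
    (Module.Flat.rTensor_preserves_injective_linearMap _ hi)
    (LinearMap.rTensor_surjective _ hq) (rTensor_exact S he hq)
  exact ext_X3 hs _ (n+1) hK hP

theorem exists_free_pres (M : Type u) [AddCommGroup M] [Module R M] :
    ∃ (K : Type u) (_ : AddCommGroup K) (_ : Module R K) (i : K →ₗ[R] (M →₀ R))
      (q : (M →₀ R) →ₗ[R] M), Function.Injective i ∧ Function.Surjective q ∧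
      Function.Exact i q :=
  ⟨(Finsupp.linearCombination R (id : M → M)).ker, inferInstance, inferInstance,
    (Finsupp.linearCombination R (id : M → M)).ker.subtype, Finsupp.linearCombination R id,
    Submodule.injective_subtype _, Finsupp.linearCombination_id_surjective R M,
    LinearMap.exact_subtype_ker_map _⟩

open TensorProduct in
theorem VExt.tens (S : Type u) [AddCommGroup S] [Module R S] [Module.Flat R S]
    (N : Type u) [AddCommGroup N] [Module R N] (hinj : Module.Injective R (S →ₗ[R] N))
    (hV : ∀ n, VExt R S (ModuleCat.of R N) (n+1)) (n : ℕ) :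
    ∀ (M : Type u) [AddCommGroup M] [Module R M], VExt R (M ⊗[R] S) (ModuleCat.of R N) (n+1) := by
  induction n with
  | zero =>
    intro M _ _
    obtain ⟨K, _, _, i, q, hi, hq, he⟩ := exists_free_pres (R := R) M
    exact VExt.tens_zero S N hinj i q hi hq he (VExt.tens_free S _ 0 (hV 0) M)
  | succ n ih =>
    intro M _ _
    obtain ⟨K, _, _, i, q, hi, hq, he⟩ := exists_free_pres (R := R) M
    exact VExt.tens_succ S _ n i q hi hq he (ih K) (VExt.tens_free S _ (n+1) (hV (n+1)) M)

open TensorProduct in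
theorem VExt.residue (S : Type u) [CommRing S] [Algebra R S] [Module.FaithfullyFlat R S]
    (N : Type u) [AddCommGroup N] [Module R N] (hinj : Module.Injective R (S →ₗ[R] N))
    (hV : ∀ n, VExt R S (ModuleCat.of R N) (n+1)) (n : ℕ)
    (K : Type u) [Field K] [Algebra R K] : VExt R K (ModuleCat.of R N) (n+1) := by
  have : Nontrivial (K ⊗[R] S) := Module.FaithfullyFlat.rTensor_nontrivial R S K
  obtain ⟨g, hg⟩ := LinearMap.exists_leftInverse_of_injective
    (Algebra.linearMap K (K ⊗[R] S)) (LinearMap.ker_eq_bot.mpr (algebraMap K (K ⊗[R] S)).injective)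
  refine (VExt.tens S N hinj hV n K).retract ((Algebra.linearMap K (K ⊗[R] S)).restrictScalars R)
    (g.restrictScalars R) ?_
  ext x
  exact LinearMap.congr_fun hg x

theorem VExt.filt_lt {N : ModuleCat.{u} R} {n : ℕ} {I : Ideal R}
    (hI : ∀ J : Ideal R, I < J → VExt R (R ⧸ J) N (n+1))
    (M : Type u) [AddCommGroup M] [Module R M] (h1 : ∀ r ∈ I, ∀ y : M, r • y = 0)
    (h2 : ∀ y : M, ∃ s, s ∉ I ∧ s • y = 0) : VExt R M N (n+1) := by
  refine VExt.filt n N M fun y J hJ => hI J ?_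
  obtain ⟨s, hs, hsy⟩ := h2 y
  exact SetLike.lt_iff_le_and_exists.mpr ⟨fun r hr => hJ r (h1 r hr y), s, hJ s hsy, hs⟩

theorem VExt.cyclic [IsNoetherianRing R] (N : ModuleCat.{u} R)
    (h : ∀ (K : Type u) [Field K] [Algebra R K] (n : ℕ), VExt R K N (n+1)) (I : Ideal R) :
    ∀ n, VExt R (R ⧸ I) N (n+1) := by
  induction I using WellFoundedGT.induction with
  | ind I ih =>
  intro n
  have hlt : ∀ n, ∀ J : Ideal R, I < J → VExt R (R ⧸ J) N (n+1) := fun n J hJ => ih J hJ n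
  have hkill : ∀ r ∈ I, ∀ y : R ⧸ I, r • y = 0 := by
    intro r hr y
    obtain ⟨y, rfl⟩ := Ideal.Quotient.mk_surjective y
    rw [Algebra.smul_def, Ideal.Quotient.algebraMap_eq, ← map_mul, Ideal.Quotient.eq_zero_iff_mem]
    exact I.mul_mem_right _ hr
  by_cases htop : I = ⊤
  · subst htop
    have : Subsingleton (R ⧸ (⊤ : Ideal R)) := Ideal.Quotient.subsingleton_iff.mpr rfl
    exact VExt.of_free _ _
  by_cases hp : I.IsPrime
  · let j : (R ⧸ I) →ₗ[R] I.ResidueField := (IsScalarTower.toAlgHom R (R ⧸ I) I.ResidueField).toLinearMap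
    have hj : Function.Injective j := I.injective_algebraMap_quotient_residueField
    refine ext_X1 (ses_mk j (Submodule.mkQ j.range) hj (Submodule.mkQ_surjective _)
      (LinearMap.exact_map_mkQ_range j)) N (n+1) (h _ n)
      (VExt.filt_lt (hlt (n+1)) _ ?_ ?_)
    · intro r hr y
      obtain ⟨y, rfl⟩ := Submodule.mkQ_surjective _ y
      rw [← map_smul, Algebra.smul_def, (Ideal.algebraMap_residueField_eq_zero).mpr hr, zero_mul, map_zero]
    · intro y
      obtain ⟨y, rfl⟩ := Submodule.mkQ_surjective _ y
      obtain ⟨a, b, hb, rfl⟩ := IsFractionRing.div_surjective (A := R ⧸ I) y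
      obtain ⟨b, rfl⟩ := Ideal.Quotient.mk_surjective b
      obtain ⟨a, rfl⟩ := Ideal.Quotient.mk_surjective a
      have hb0 : Ideal.Quotient.mk I b ≠ 0 := nonZeroDivisors.ne_zero hb
      refine ⟨b, fun h => hb0 (Ideal.Quotient.eq_zero_iff_mem.mpr h), ?_⟩
      rw [← map_smul]
      rw [Submodule.mkQ_apply, Submodule.Quotient.mk_eq_zero]
      refine ⟨Ideal.Quotient.mk I a, ?_⟩
      have : algebraMap (R ⧸ I) I.ResidueField (Ideal.Quotient.mk I b) ≠ 0 := fun h0 =>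
        hb0 (I.injective_algebraMap_quotient_residueField (by rw [h0, map_zero]))
      rw [Algebra.smul_def, IsScalarTower.algebraMap_apply R (R ⧸ I) I.ResidueField,
        Ideal.Quotient.algebraMap_eq, mul_div_cancel₀ _ this]
      rfl
  · rw [Ideal.isPrime_iff] at hp
    push Not at hp
    obtain ⟨a, b, hab, ha, hb⟩ := hp htop
    let L : Submodule R (R ⧸ I) := Submodule.span R {Ideal.Quotient.mk I a}
    refine ext_X2 (ses_mk L.subtype L.mkQ L.injective_subtype L.mkQ_surjective
      (LinearMap.exact_subtype_mkQ L)) N (n+1) (VExt.filt_lt (hlt n) _ ?_ ?_)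
      (VExt.filt_lt (hlt n) _ ?_ ?_)
    · intro r hr y
      exact Subtype.ext (hkill r hr y)
    · rintro ⟨y, hy⟩
      obtain ⟨c, rfl⟩ := Submodule.mem_span_singleton.mp hy
      refine ⟨b, hb, Subtype.ext ?_⟩
      change b • c • Ideal.Quotient.mk I a = 0
      rw [smul_comm, Algebra.smul_def b, Ideal.Quotient.algebraMap_eq, ← map_mul, mul_comm b a,
        Ideal.Quotient.eq_zero_iff_mem.mpr hab, smul_zero]
    · intro r hr y
      obtain ⟨y, rfl⟩ := Submodule.mkQ_surjective _ y
      rw [← map_smul, hkill r hr, map_zero]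
    · intro y
      obtain ⟨y, rfl⟩ := Submodule.mkQ_surjective _ y
      obtain ⟨y, rfl⟩ := Ideal.Quotient.mk_surjective y
      refine ⟨a, ha, ?_⟩
      rw [← map_smul, Submodule.mkQ_apply, Submodule.Quotient.mk_eq_zero]
      refine Submodule.mem_span_singleton.mpr ⟨y, ?_⟩
      simp only [Algebra.smul_def, Ideal.Quotient.algebraMap_eq, mul_comm]

theorem injective_of_hom [IsNoetherianRing R]
    (S : Type u) [CommRing S] [Algebra R S] [Module.FaithfullyFlat R S]
    (N : Type u) [AddCommGroup N] [Module R N] (hinj : Module.Injective R (S →ₗ[R] N))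
    (hV : ∀ n, VExt R S (ModuleCat.of R N) (n+1)) : Module.Injective R N := by
  apply Module.Baer.injective
  intro I g
  exact (VExt.cyclic (ModuleCat.of R N) (fun K _ _ n => VExt.residue S N hinj hV n K) I 0).extend_ideal g

theorem coext_injective (S : Type u) [CommRing S] [Algebra R S]
    (N : Type u) [AddCommGroup N] [Module R N] (hN : Module.Injective R N) :
    Module.Injective S ((ModuleCat.coextendScalars (algebraMap R S)).obj (ModuleCat.of R N)) := by
  have : Injective (ModuleCat.of R N) := Module.injective_object_of_injective_module R N
  have := Injective.injective_of_adjoint (ModuleCat.restrictCoextendScalarsAdj (algebraMap R S))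
    (ModuleCat.of R N)
  exact Module.injective_module_of_injective_object S _

/-- The `S`-module structure on `Hom_R(S,N)` through the first variable. -/
@[reducible] def homModule (S : Type u) [CommRing S] [Algebra R S]
    (N : Type u) [AddCommGroup N] [Module R N] : Module S (S →ₗ[R] N) where
  smul s f := f ∘ₗ LinearMap.mulRight R s
  one_smul f := by
    ext x; change f (x * 1) = f x; rw [mul_one]
  mul_smul s t f := by
    ext x; change f (x * (s * t)) = f (x * s * t); rw [mul_assoc]
  smul_zero s := rfl
  smul_add s f g := rfl
  add_smul s t f := by
    ext x; change f (x * (s + t)) = f (x * s) + f (x * t); rw [mul_add, map_add]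
  zero_smul f := by
    ext x; change f (x * 0) = 0; rw [mul_zero, map_zero]

open TensorProduct in
theorem hom_injective_aux (S : Type u) [CommRing S] [Algebra R S] [Module.Flat R S]
    (Q : Type u) [AddCommGroup Q] [Module R Q] [Module S Q] [IsScalarTower R S Q]
    (h : Module.Injective S Q) : Module.Injective R Q where
  out X Y _ _ _ _ f hf g := by
    obtain ⟨k, hk⟩ := h.out (TensorProduct.AlgebraTensorModule.lTensor S S f)
      (Module.Flat.lTensor_preserves_injective_linearMap f hf)
      (TensorProduct.AlgebraTensorModule.lift (LinearMap.toSpanSingleton S (X →ₗ[R] Q) g))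
    refine ⟨k.restrictScalars R ∘ₗ TensorProduct.mk R S Y 1, fun x => ?_⟩
    simpa using hk (1 ⊗ₜ x)

theorem hom_injective (S : Type u) [CommRing S] [Algebra R S] [Module.Flat R S]
    (N : Type u) [AddCommGroup N] [Module R N]
    (h : Module.Injective S ((ModuleCat.coextendScalars (algebraMap R S)).obj (ModuleCat.of R N))) :
    Module.Injective R (S →ₗ[R] N) := by
  let _ : Module S (S →ₗ[R] N) := homModule S N
  have : IsScalarTower R S (S →ₗ[R] N) := ⟨fun r s f => by
    ext x
    change f (x * (r • s)) = r • f (x * s)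
    rw [mul_smul_comm, map_smul]⟩
  apply hom_injective_aux S
  let e := ModuleCat.CoextendScalars.equiv (algebraMap R S) (ModuleCat.of R N)
  let a : (S →ₗ[R] N) →ₗ[S] ((ModuleCat.coextendScalars (algebraMap R S)).obj (ModuleCat.of R N)) :=
    { toFun := fun φ => e.symm
        { toFun := fun s : S => φ s
          map_add' := fun x y => φ.map_add x y
          map_smul' := fun r (x : S) => by
            change φ (algebraMap R S r * x) = r • φ x
            rw [← Algebra.smul_def, map_smul] }
      map_add' := fun _ _ => rfl
      map_smul' := fun _ _ => rfl }
  let b : ((ModuleCat.coextendScalars (algebraMap R S)).obj (ModuleCat.of R N)) →ₗ[S] (S →ₗ[R] N) :=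
    { toFun := fun φ =>
        { toFun := fun s : S => e φ s
          map_add' := fun x y => (e φ).map_add x y
          map_smul' := fun r (x : S) => by
            rw [Algebra.smul_def]
            exact (e φ).map_smul r x }
      map_add' := fun _ _ => rfl
      map_smul' := fun _ _ => rfl }
  refine ⟨fun X Y _ _ _ _ f hf g => ?_⟩
  obtain ⟨k, hk⟩ := h.out f hf (a ∘ₗ g)
  refine ⟨b ∘ₗ k, fun x => ?_⟩
  change b (k (f x)) = g x
  rw [hk]
  rfl

/-- Let `R` be a commutative noetherian ring over which every flat `R`-module has finite
projective dimension, let `S` be a faithfully flat (commutative) `R`-algebra, and let `N`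
be an `R`-module.  The following conditions are equivalent:
(i) `N` is an injective `R`-module;
(ii) `Hom_R(S,N)` is an injective `R`-module and `Ext_R^n(S,N) = 0` for all `n > 0`;
(iii) `Hom_R(S,N)` (with its `S`-module structure through the first variable, i.e. the
coextension of scalars of `N`) is an injective `S`-module and `Ext_R^n(S,N) = 0` for all
`n > 0`. -/
theorem injective_tfae_homS_injective
    (R : Type u) [CommRing R] [IsNoetherianRing R]
    (S : Type u) [CommRing S] [Algebra R S] [Module.FaithfullyFlat R S]
    (hpd : ∀ (F : Type u) [AddCommGroup F] [Module R F], Module.Flat R F →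
      ∃ n : ℕ, projResBddAbove R (ModuleCat.of R F) n)
    (N : Type u) [AddCommGroup N] [Module R N] :
    (Module.Injective R N ↔
      (Module.Injective R (S →ₗ[R] N) ∧ ∀ n : ℕ, 0 < n → Subsingleton (extmod R S N n))) ∧
    (Module.Injective R N ↔
      (Module.Injective S
          ((ModuleCat.coextendScalars (algebraMap R S)).obj (ModuleCat.of R N)) ∧
        ∀ n : ℕ, 0 < n → Subsingleton (extmod R S N n))) := by
  have hlink : (∀ n : ℕ, 0 < n → Subsingleton (extmod R S N n)) ↔
      ∀ n, VExt R S (ModuleCat.of R N) (n+1) :=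
    ⟨fun h n => (link R S N n).mp (h _ n.succ_pos), fun h n hn => by
      obtain ⟨m, rfl⟩ := Nat.exists_eq_succ_of_ne_zero hn.ne'
      exact (link R S N m).mpr (h m)⟩
  rw [hlink]
  have hfwd : Module.Injective R N → ∀ n, VExt R S (ModuleCat.of R N) (n+1) := fun hN n => by
    have : Injective (ModuleCat.of R N) := Module.injective_object_of_injective_module R N
    exact Abelian.Ext.subsingleton_of_injective _ _ _
  exact ⟨⟨fun hN => ⟨hom_injective S N (coext_injective S N hN), hfwd hN⟩,
      fun h => injective_of_hom S N h.1 h.2⟩,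
    ⟨fun hN => ⟨coext_injective S N hN, hfwd hN⟩,
      fun h => injective_of_hom S N (hom_injective S N h.1) h.2⟩⟩
end

section
/- Let R be a commutative noetherian ring, S a faithfully flat R-algebra, and N an R-module of finite injective dimension. If Hom_R(S,N) is an injective R-module and Ext_R^n(S,N) = 0 for all n > 0, then N is an injective R-module. -/
/-!
Common definitions: `extmod R M N n` is the `n`-th Ext module `Ext_R^n(M,N)`.
-/

open CategoryTheory

universe u

/-- The `R`-module `N` admits an injective resolution `I` with `I^m = 0` for all `m > j`;
i.e. `N` has injective dimension at most `j`. -/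
def injResBddAbove (R : Type u) [CommRing R] (N : ModuleCat.{u} R) (j : ℤ) : Prop :=
  ∃ I : InjectiveResolution N, ∀ m : ℕ, j < (m : ℤ) → Limits.IsZero (I.cocomplex.X m)

open TensorProduct

section
variable {R : Type u} [CommRing R] (S : Type u) [CommRing S] [Algebra R S]
  {N I Q : Type u} [AddCommGroup N] [Module R N] [AddCommGroup I] [Module R I]
  [AddCommGroup Q] [Module R Q]

theorem aux_retract_injective (hI : Module.Injective R I) (i : N →ₗ[R] I) (r : I →ₗ[R] N)
    (h : ∀ x, r (i x) = x) : Module.Injective R N := by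
  refine ⟨fun X Y _ _ _ _ f hf g => ?_⟩
  obtain ⟨k, hk⟩ := hI.out f hf (i ∘ₗ g)
  exact ⟨r ∘ₗ k, fun x => by simp [hk, h]⟩

theorem aux_section (i : N →ₗ[R] I) (p : I →ₗ[R] Q) (hi : Function.Injective i)
    (hp : Function.Surjective p) (he : Function.Exact i p) (hN : Module.Injective R N) :
    ∃ s : Q →ₗ[R] I, ∀ x, p (s x) = x := by
  obtain ⟨r, hr⟩ := hN.out i hi LinearMap.id
  have h : ∃ l, l ∘ₗ i = LinearMap.id := ⟨r, LinearMap.ext hr⟩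
  obtain ⟨s, hs⟩ := (((Function.Exact.split_tfae' he).out 1 0 :
    (Function.Surjective p ∧ ∃ l, l ∘ₗ i = LinearMap.id) ↔
    (Function.Injective i ∧ ∃ l, p ∘ₗ l = LinearMap.id)).1 ⟨hp, h⟩).2
  exact ⟨s, LinearMap.congr_fun hs⟩

theorem aux_retraction (i : N →ₗ[R] I) (p : I →ₗ[R] Q) (hi : Function.Injective i)
    (he : Function.Exact i p) (s : Q →ₗ[R] I) (hs : ∀ x, p (s x) = x) :
    ∃ r : I →ₗ[R] N, ∀ x, r (i x) = x := by
  obtain ⟨r, hr⟩ := (((Function.Exact.split_tfae' he).out 0 1 :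
    (Function.Injective i ∧ ∃ l, p ∘ₗ l = LinearMap.id) ↔
    (Function.Surjective p ∧ ∃ l, l ∘ₗ i = LinearMap.id)).1 ⟨hi, s, LinearMap.ext hs⟩).2
  exact ⟨r, LinearMap.congr_fun hr⟩

theorem aux_hom_injective [Module.Flat R S] (hI : Module.Injective R I) :
    Module.Injective R (S →ₗ[R] I) := by
  refine ⟨fun X Y _ _ _ _ f hf g => ?_⟩
  obtain ⟨k, hk⟩ := hI.out (f.rTensor S) (Module.Flat.rTensor_preserves_injective_linearMap f hf)
    (TensorProduct.lift g)
  refine ⟨TensorProduct.curry k, fun x => ?_⟩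
  ext s
  simpa using hk (x ⊗ₜ s)

theorem aux_hom_section (i : N →ₗ[R] I) (p : I →ₗ[R] Q) (hi : Function.Injective i)
    (he : Function.Exact i p) (hN : Module.Injective R (S →ₗ[R] N))
    (hl : ∀ f : S →ₗ[R] Q, ∃ g : S →ₗ[R] I, p ∘ₗ g = f) :
    ∃ σ : (S →ₗ[R] Q) →ₗ[R] (S →ₗ[R] I), ∀ f, p ∘ₗ (σ f) = f := by
  refine aux_section (i.compRight R) (p.compRight R) ?_ hl ?_ hN
  · intro a b h
    ext s
    exact hi (LinearMap.congr_fun h s)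
  · intro f
    constructor
    · intro h
      have h' : ∀ s, ∃ n, i n = f s := fun s => (he (f s)).1 (LinearMap.congr_fun h s)
      refine ⟨(LinearEquiv.ofInjective i hi).symm ∘ₗ f.codRestrict (LinearMap.range i) h', ?_⟩
      ext s
      have := (LinearEquiv.ofInjective i hi).apply_symm_apply
        (f.codRestrict (LinearMap.range i) h' s)
      exact congrArg Subtype.val this
    · rintro ⟨g, rfl⟩
      ext s
      exact he.apply_apply_eq_zero (g s)

theorem aux_final [Module.FaithfullyFlat R S] (i : N →ₗ[R] I) (p : I →ₗ[R] Q)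
    (hi : Function.Injective i) (he : Function.Exact i p)
    (hI : Module.Injective R I) (hQ : Module.Injective R Q)
    (σ : (S →ₗ[R] Q) →ₗ[R] (S →ₗ[R] I)) (hσ : ∀ f, p ∘ₗ (σ f) = f) :
    Module.Injective R N := by
  obtain ⟨g, hg⟩ := hQ.out (TensorProduct.mk R S Q 1)
    (Module.FaithfullyFlat.tensorProduct_mk_injective (A := R) (B := S) Q) LinearMap.id
  obtain ⟨r, hr⟩ := aux_retraction i p hi he
    (LinearMap.applyₗ (1 : S) ∘ₗ σ ∘ₗ (TensorProduct.curry g).flip) (fun x => by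
      have := LinearMap.congr_fun (hσ ((TensorProduct.curry g).flip x)) 1
      simpa using this.trans (hg x))
  exact aux_retract_injective hI i r hr

end

theorem aux_main_s2 {R : Type u} [CommRing R] (S : Type u) [CommRing S] [Algebra R S]
    [Module.FaithfullyFlat R S] (d : ℕ) : ∀ (N : ModuleCat.{u} R),
    HasInjectiveDimensionLT N (d + 1) → Module.Injective R (S →ₗ[R] N) →
    (∀ n : ℕ, 0 < n → Subsingleton (Abelian.Ext.{u} (ModuleCat.of R S) N n)) →
    Module.Injective R N := by
  induction d with
  | zero =>
    intro N h _ _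
    exact (Module.injective_iff_injective_object R N).2
      (injective_iff_hasInjectiveDimensionLT_one.2 h)
  | succ d ih =>
    intro N h hN hE
    let T : ShortComplex (ModuleCat.{u} R) :=
      ShortComplex.mk (Injective.ι N) (Limits.cokernel.π (Injective.ι N)) (by simp)
    have hT : T.ShortExact :=
      { exact := ShortComplex.exact_cokernel _
        mono_f := inferInstanceAs (Mono (Injective.ι N))
        epi_g := inferInstanceAs (Epi (Limits.cokernel.π (Injective.ι N))) }
    have hinj : CategoryTheory.Injective T.X₂ :=
      inferInstanceAs (CategoryTheory.Injective (Injective.under N))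
    have hI : Module.Injective R T.X₂ := (Module.injective_iff_injective_object R T.X₂).2 hinj
    have hd := (hT.hasInjectiveDimensionLT_X₃_iff d hinj).2 h
    have hi : Function.Injective T.f.hom := hT.moduleCat_injective_f
    have he : Function.Exact T.f.hom T.g.hom :=
      (ShortComplex.ShortExact.moduleCat_exact_iff_function_exact T).1 hT.exact
    have hl : ∀ f : S →ₗ[R] T.X₃, ∃ g : S →ₗ[R] T.X₂, T.g.hom ∘ₗ g = f := by
      intro f
      have := hE 1 one_pos
      obtain ⟨x, hx⟩ := Abelian.Ext.covariant_sequence_exact₃ (ModuleCat.of R S) hT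
        (Abelian.Ext.mk₀ (ModuleCat.ofHom f)) (zero_add 1) (Subsingleton.elim (α :=
          Abelian.Ext.{u} (ModuleCat.of R S) N 1) _ _)
      obtain ⟨x, rfl⟩ := Abelian.Ext.homEquiv₀.symm.surjective x
      rw [Abelian.Ext.homEquiv₀_symm_apply, Abelian.Ext.mk₀_comp_mk₀] at hx
      have := (Abelian.Ext.mk₀_bijective _ _).1 hx
      exact ⟨x.hom, by simpa using congrArg ModuleCat.Hom.hom this⟩
    have hE' : ∀ n : ℕ, 0 < n → Subsingleton (Abelian.Ext.{u} (ModuleCat.of R S) T.X₃ n) := by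
      intro n hn
      refine subsingleton_of_forall_eq 0 fun y => ?_
      have := hE (n + 1) n.succ_pos
      obtain ⟨x, rfl⟩ := Abelian.Ext.covariant_sequence_exact₃ (ModuleCat.of R S) hT
        y rfl (Subsingleton.elim (α := Abelian.Ext.{u} (ModuleCat.of R S) N (n + 1)) _ _)
      rw [x.eq_zero_of_hasInjectiveDimensionLT 1 hn, Abelian.Ext.zero_comp]
    obtain ⟨σ, hσ⟩ := aux_hom_section S (N := N) T.f.hom T.g.hom hi he hN hl
    have hQ' : Module.Injective R (S →ₗ[R] T.X₃) :=
      aux_retract_injective (aux_hom_injective S hI) σ (T.g.hom.compRight R) hσ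
    exact aux_final S (N := N) T.f.hom T.g.hom hi he hI (ih T.X₃ hd hQ' hE') σ hσ

/-- Let `R` be a commutative noetherian ring, `S` a faithfully flat (commutative)
`R`-algebra, and `N` an `R`-module of finite injective dimension.  If `Hom_R(S,N)` is an
injective `R`-module and `Ext_R^n(S,N) = 0` for all `n > 0`, then `N` is an injective
`R`-module. -/
theorem injective_of_finite_injective_dimension
    (R : Type u) [CommRing R] [IsNoetherianRing R]
    (S : Type u) [CommRing S] [Algebra R S] [Module.FaithfullyFlat R S]
    (N : Type u) [AddCommGroup N] [Module R N]
    (hfid : ∃ i : ℕ, injResBddAbove R (ModuleCat.of R N) (i : ℤ))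
    (hinj : Module.Injective R (S →ₗ[R] N))
    (hext : ∀ n : ℕ, 0 < n → Subsingleton (extmod R S N n)) :
    Module.Injective R N := by
  obtain ⟨d, I, hI⟩ := hfid
  refine aux_main_s2 S d (ModuleCat.of R N) ?_ hinj ?_
  · refine HasInjectiveDimensionLT.mk.{u} fun n hn Y e => ?_
    obtain ⟨f, hf, rfl⟩ := I.extMk_surjective e (n + 1) rfl
    obtain rfl : f = 0 := (hI n (by omega)).eq_of_tgt _ _
    exact I.extMk_zero _ _
  · intro n hn
    refine subsingleton_of_forall_eq 0 fun y => ?_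
    let P := projectiveResolution (ModuleCat.of R S)
    obtain ⟨p, rfl⟩ : ∃ p, n = p + 1 := ⟨n - 1, by omega⟩
    obtain ⟨f, hf, rfl⟩ := P.extMk_surjective y (p + 1 + 1) rfl
    rw [P.extMk_eq_zero_iff _ _ _ _ p rfl]
    have h1 := hext (p + 1) hn
    have h2 : Limits.IsZero ((P.complex.linearYonedaObj R (ModuleCat.of R N)).homology (p + 1)) :=
      Limits.IsZero.of_iso (ModuleCat.isZero_of_subsingleton (extmod R S N (p + 1)))
        (P.isoExt (p + 1) (ModuleCat.of R N)).symm
    rw [← HomologicalComplex.exactAt_iff_isZero_homology,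
      HomologicalComplex.exactAt_iff' _ p (p + 1) (p + 1 + 1) (by simp) (by simp),
      ShortComplex.moduleCat_exact_iff] at h2
    obtain ⟨g, hg⟩ := h2 f hf
    exact ⟨g, hg⟩
end

section
/- Let R be a commutative noetherian ring, S a flat R-algebra, and N an R-module with Ext_R^n(S,N) = 0 for all n > 0. Then for every R-module E and every n ≥ 0 there is an isomorphism Ext_R^n(S ⊗_R E, N) ≅ Ext_R^n(E, Hom_R(S,N)). -/
/-!
Common definitions: `extmod R M N n` is the `n`-th Ext module `Ext_R^n(M,N)`.
-/

open CategoryTheory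

universe u

section Helpers

open CategoryTheory Abelian Limits

/-- Two quotients of the same module by the same kernel are isomorphic. -/
theorem nonempty_equiv_of_ker_eq {R Z A B : Type*} [CommRing R] [AddCommGroup Z] [Module R Z]
    [AddCommGroup A] [Module R A] [AddCommGroup B] [Module R B]
    (a : Z →ₗ[R] A) (b : Z →ₗ[R] B) (ha : Function.Surjective a) (hb : Function.Surjective b)
    (h : ∀ z, a z = 0 ↔ b z = 0) : Nonempty (A ≃ₗ[R] B) := by
  have hk : LinearMap.ker a = LinearMap.ker b := by
    ext z; simpa using h z
  exact ⟨(a.quotKerEquivOfSurjective ha).symm ≪≫ₗ Submodule.quotEquivOfEq _ _ hk ≪≫ₗ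
    b.quotKerEquivOfSurjective hb⟩

/-- Kernel of the map from cocycles to `Ext`, uniformly in the degree. -/
theorem extMk_eq_zero_iff_prev {C : Type*} [Category C] [Abelian C] [HasExt.{u} C] {X Y : C}
    (P : ProjectiveResolution X) (n : ℕ) (f : P.complex.X n ⟶ Y)
    (hf : P.complex.d (n + 1) n ≫ f = 0) :
    P.extMk f (n + 1) rfl hf = 0 ↔
      ∃ g : P.complex.X (n - 1) ⟶ Y, P.complex.d n (n - 1) ≫ g = f := by
  cases n with
  | succ n => exact P.extMk_eq_zero_iff f (n + 2) rfl hf n rfl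
  | zero =>
    have hd : P.complex.d 0 (0 - 1) = 0 := P.complex.shape _ _ (by simp)
    simp only [hd, zero_comp]
    constructor
    · intro h
      refine ⟨0, ?_⟩
      have h2 := congrArg P.extEquivCohomologyClass h
      simp only [ProjectiveResolution.extEquivCohomologyClass_extMk,
        ProjectiveResolution.extEquivCohomologyClass_zero,
        CochainComplex.HomComplex.CohomologyClass.mk_eq_zero_iff] at h2
      rw [CochainComplex.HomComplex.Cocycle.toSingleMk_mem_coboundaries_iff _ _ _ _ _ 1
        (by simp)] at h2
      obtain ⟨g, hg⟩ := h2
      have hz : IsZero (P.cochainComplex.X 1) := P.cochainComplex.isZero_of_isStrictlyLE 0 1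
      rw [hz.eq_of_src g 0, comp_zero] at hg
      rw [← cancel_epi (P.cochainComplexXIso (-(0:ℕ)) 0 rfl).hom, comp_zero]
      exact hg
    · rintro ⟨_, rfl⟩
      simp

/-- The map from cocycles to `Ext` is compatible with scalars. -/
theorem extMk_smul {R : Type u} [CommRing R] {X Y : ModuleCat.{u} R}
    (P : ProjectiveResolution X) (n : ℕ) (r : R) (f : P.complex.X n ⟶ Y)
    (hf : P.complex.d (n + 1) n ≫ f = 0) (hf2 : P.complex.d (n + 1) n ≫ (r • f) = 0) :
    P.extMk (r • f) (n + 1) rfl hf2 = r • P.extMk f (n + 1) rfl hf := by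
  simp [Ext.smul_eq_comp_mk₀, P.extMk_comp_mk₀]

/-- The comparison between the two definitions of `Ext`. -/
theorem ext_bridge (R : Type u) [CommRing R] (X Y : ModuleCat.{u} R) (n : ℕ) :
    Nonempty ((((_root_.Ext R (ModuleCat.{u} R) n).obj (Opposite.op X)).obj Y) ≃ₗ[R]
      Abelian.Ext.{u} X Y n) := by
  let P := projectiveResolution X
  let K := P.complex.linearYonedaObj R Y
  let T := K.sc' (n - 1) n (n + 1)
  let e1 : ((_root_.Ext R (ModuleCat.{u} R) n).obj (Opposite.op X)).obj Y ≅ T.homology :=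
    P.isoExt n Y ≪≫ ShortComplex.homologyMapIso
      (K.isoSc' (n - 1) n (n + 1) (by cases n <;> simp) (by simp))
  let e2 := T.moduleCatHomologyIso
  have hker : ∀ f : LinearMap.ker T.g.hom, P.complex.d (n + 1) n ≫ (f.1 : P.complex.X n ⟶ Y) = 0 :=
    fun f => f.2
  let b : LinearMap.ker T.g.hom →ₗ[R] Abelian.Ext.{u} X Y n :=
    { toFun := fun f => P.extMk (f.1 : P.complex.X n ⟶ Y) (n + 1) rfl (hker f)
      map_add' := fun f g => (P.add_extMk _ _ (n + 1) rfl (hker f) (hker g)).symm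
      map_smul' := fun r f => extMk_smul P n r _ (hker f) (hker (r • f)) }
  have key : Nonempty ((LinearMap.ker T.g.hom ⧸ LinearMap.range T.moduleCatToCycles) ≃ₗ[R]
      Abelian.Ext.{u} X Y n) := by
    refine nonempty_equiv_of_ker_eq (Submodule.mkQ _) b (Submodule.mkQ_surjective _) ?_ ?_
    · intro α
      obtain ⟨f, hf, rfl⟩ := P.extMk_surjective α (n + 1) rfl
      exact ⟨⟨f, hf⟩, rfl⟩
    · intro f
      rw [Submodule.mkQ_apply, Submodule.Quotient.mk_eq_zero]
      refine Iff.trans ?_ (extMk_eq_zero_iff_prev P n _ (hker f)).symm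
      constructor
      · rintro ⟨g, hg⟩
        exact ⟨g, congrArg Subtype.val hg⟩
      · rintro ⟨g, hg⟩
        exact ⟨g, Subtype.ext hg⟩
  obtain ⟨e3⟩ := key
  exact ⟨e1.toLinearEquiv ≪≫ₗ e2.toLinearEquiv ≪≫ₗ e3⟩

/-- `Ext` out of a direct sum vanishes if `Ext` out of the summand does. -/
theorem ext_finsupp_eq_zero (R : Type u) [CommRing R] (S N : Type u) [AddCommGroup S] [Module R S]
    [AddCommGroup N] [Module R N] (ι : Type u) (n : ℕ)
    (h : Subsingleton (Abelian.Ext.{u} (ModuleCat.of R S) (ModuleCat.of R N) (n + 1))) :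
    Subsingleton (Abelian.Ext.{u} (ModuleCat.of R (ι →₀ S)) (ModuleCat.of R N) (n + 1)) := by
  refine subsingleton_of_forall_eq 0 fun α => ?_
  let I := injectiveResolution (ModuleCat.of R N)
  obtain ⟨f, hf, rfl⟩ := I.extMk_surjective α (n + 2) rfl
  rw [I.extMk_eq_zero_iff f (n + 2) rfl hf n rfl]
  have h1 : ∀ i : ι, ∃ g : ModuleCat.of R S ⟶ I.cocomplex.X n,
      g ≫ I.cocomplex.d n (n + 1) = ModuleCat.ofHom (Finsupp.lsingle i) ≫ f := fun i =>
    (I.extMk_eq_zero_iff _ (n + 2) rfl (by rw [Category.assoc, hf, comp_zero]) n rfl).1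
      (Subsingleton.elim _ _)
  choose g hg using h1
  refine ⟨ModuleCat.ofHom (Finsupp.lsum R fun i => (g i).hom), ?_⟩
  ext : 1
  refine Finsupp.lhom_ext fun i s => ?_
  have := congrArg (fun k => k.hom s) (hg i)
  simpa using this

/-- `Ext` out of `S ⊗ (free module)` vanishes if `Ext` out of `S` does. -/
theorem ext_tensor_free_eq_zero (R : Type u) [CommRing R] (S N : Type u) [AddCommGroup S]
    [Module R S] [AddCommGroup N] [Module R N] (ι : Type u) (n : ℕ)
    (h : Subsingleton (Abelian.Ext.{u} (ModuleCat.of R S) (ModuleCat.of R N) (n + 1))) :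
    Subsingleton (Abelian.Ext.{u} (ModuleCat.of R (TensorProduct R S (ι →₀ R)))
      (ModuleCat.of R N) (n + 1)) := by
  classical
  have h2 := ext_finsupp_eq_zero R S N ι n h
  let e : ModuleCat.of R (TensorProduct R S (ι →₀ R)) ≅ ModuleCat.of R (ι →₀ S) :=
    (TensorProduct.finsuppScalarRight R R S ι).toModuleIso
  refine subsingleton_of_forall_eq 0 fun α => ?_
  have h3 : (Ext.mk₀ e.inv).comp α (zero_add _) = 0 := Subsingleton.elim _ _
  have h4 := congrArg (fun β => (Ext.mk₀ e.hom).comp β (zero_add _)) h3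
  simpa using h4

/-- Dimension shifting in degrees at least two. -/
theorem ext_shift_s7 (R : Type u) [CommRing R] {T : ShortComplex (ModuleCat.{u} R)}
    (hT : T.ShortExact) (Y : ModuleCat.{u} R) (n : ℕ)
    (h : ∀ n, Subsingleton (Abelian.Ext.{u} T.X₂ Y (n + 1))) :
    Nonempty (Abelian.Ext.{u} T.X₁ Y (n + 1) ≃ₗ[R] Abelian.Ext.{u} T.X₃ Y (n + 2)) := by
  refine ⟨LinearEquiv.ofBijective
    (hT.extClass.precompOfLinear R Y (by omega : 1 + (n + 1) = n + 2)) ⟨?_, ?_⟩⟩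
  · rw [injective_iff_map_eq_zero]
    intro a ha
    obtain ⟨b, rfl⟩ := Ext.contravariant_sequence_exact₁ hT Y a (by omega) ha
    rw [Subsingleton.elim b 0, Ext.comp_zero]
  · intro a
    exact Ext.contravariant_sequence_exact₃ hT Y a (Subsingleton.elim _ _ : _ = _) (by omega)

/-- The connecting map on `Hom`. -/
noncomputable def extDelta (R : Type u) [CommRing R] {T : ShortComplex (ModuleCat.{u} R)}
    (hT : T.ShortExact) (Y : ModuleCat.{u} R) :
    (T.X₁ ⟶ Y) →ₗ[R] Abelian.Ext.{u} T.X₃ Y 1 :=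
  (hT.extClass.precompOfLinear R Y (by omega : 1 + 0 = 1)) ∘ₗ
    (Ext.linearEquiv₀ (R := R)).symm.toLinearMap

theorem extDelta_eq_zero (R : Type u) [CommRing R] {T : ShortComplex (ModuleCat.{u} R)}
    (hT : T.ShortExact) (Y : ModuleCat.{u} R) (f : T.X₁ ⟶ Y) :
    extDelta R hT Y f = 0 ↔ ∃ g : T.X₂ ⟶ Y, T.f ≫ g = f := by
  have h0 : extDelta R hT Y f = hT.extClass.comp (Ext.mk₀ f) (by omega : 1 + 0 = 1) := rfl
  rw [h0]
  constructor
  · intro h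
    obtain ⟨b, hb⟩ := Ext.contravariant_sequence_exact₁ hT Y (Ext.mk₀ f) (by omega) h
    obtain ⟨g, rfl⟩ := (Ext.linearEquiv₀ (R := R)).symm.surjective b
    refine ⟨g, ?_⟩
    apply (Ext.linearEquiv₀ (R := R)).symm.injective
    simpa using hb
  · rintro ⟨g, rfl⟩
    rw [← Ext.mk₀_comp_mk₀, hT.extClass_comp_assoc]

theorem extDelta_surjective (R : Type u) [CommRing R] {T : ShortComplex (ModuleCat.{u} R)}
    (hT : T.ShortExact) (Y : ModuleCat.{u} R)
    (h : ∀ n, Subsingleton (Abelian.Ext.{u} T.X₂ Y (n + 1))) :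
    Function.Surjective (extDelta R hT Y) := by
  intro a
  have := h 0
  obtain ⟨b, hb⟩ := Ext.contravariant_sequence_exact₃ hT Y a
    (Subsingleton.elim _ _ : _ = _) (by omega : 1 + 0 = 1)
  obtain ⟨g, rfl⟩ := (Ext.linearEquiv₀ (R := R)).symm.surjective b
  exact ⟨g, hb⟩

/-- Tensor-hom adjunction for morphisms in `ModuleCat`. -/
noncomputable def adjHom (R : Type u) [CommRing R] (S N E : Type u) [AddCommGroup S]
    [Module R S] [AddCommGroup N] [Module R N] [AddCommGroup E] [Module R E] :
    (ModuleCat.of R E ⟶ ModuleCat.of R (S →ₗ[R] N)) ≃ₗ[R]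
      (ModuleCat.of R (TensorProduct R S E) ⟶ ModuleCat.of R N) :=
  let e : (E →ₗ[R] S →ₗ[R] N) ≃ₗ[R] (TensorProduct R S E →ₗ[R] N) :=
    LinearMap.lflip ≪≫ₗ TensorProduct.lift.equiv (RingHom.id R) S E N
  ModuleCat.homLinearEquiv (S := R) (M := ModuleCat.of R E) (N := ModuleCat.of R (S →ₗ[R] N)) ≪≫ₗ
    e ≪≫ₗ (ModuleCat.homLinearEquiv (S := R) (M := ModuleCat.of R (TensorProduct R S E))
      (N := ModuleCat.of R N)).symm

theorem adjHom_naturality (R : Type u) [CommRing R] (S N E F : Type u) [AddCommGroup S]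
    [Module R S] [AddCommGroup N] [Module R N] [AddCommGroup E] [Module R E]
    [AddCommGroup F] [Module R F] (f : F →ₗ[R] E)
    (g : ModuleCat.of R E ⟶ ModuleCat.of R (S →ₗ[R] N)) :
    adjHom R S N F (ModuleCat.ofHom f ≫ g) =
      ModuleCat.ofHom (f.lTensor S) ≫ adjHom R S N E g := by
  ext : 1
  refine TensorProduct.ext' fun s x => ?_
  rfl

theorem lT_exact (R : Type u) [CommRing R] (S K P E : Type u) [AddCommGroup S] [Module R S]
    [AddCommGroup K] [Module R K] [AddCommGroup P] [Module R P] [AddCommGroup E] [Module R E]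
    (f : K →ₗ[R] P) (g : P →ₗ[R] E) (h : Function.Exact f g) (hg : Function.Surjective g) :
    Function.Exact (f.lTensor S) (g.lTensor S) :=
  lTensor_exact S h hg

/-- The dimension shifting step, for an abstract short exact sequence. -/
theorem ext_adj_step (R : Type u) [CommRing R] (S N K P E : Type u) [AddCommGroup S] [Module R S]
    [Module.Flat R S] [AddCommGroup N] [Module R N]
    [AddCommGroup K] [Module R K] [AddCommGroup P] [Module R P] [AddCommGroup E] [Module R E]
    (f : K →ₗ[R] P) (g : P →ₗ[R] E) (hf : Function.Injective f) (hfg : Function.Exact f g)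
    (hg : Function.Surjective g)
    (hX : ∀ n, Subsingleton
      (Abelian.Ext.{u} (ModuleCat.of R P) (ModuleCat.of R (S →ₗ[R] N)) (n + 1)))
    (hX' : ∀ n, Subsingleton
      (Abelian.Ext.{u} (ModuleCat.of R (TensorProduct R S P)) (ModuleCat.of R N) (n + 1)))
    (n : ℕ)
    (ih : Nonempty (Abelian.Ext.{u} (ModuleCat.of R (TensorProduct R S K)) (ModuleCat.of R N) n
      ≃ₗ[R] Abelian.Ext.{u} (ModuleCat.of R K) (ModuleCat.of R (S →ₗ[R] N)) n)) :
    Nonempty (Abelian.Ext.{u} (ModuleCat.of R (TensorProduct R S E)) (ModuleCat.of R N) (n + 1)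
      ≃ₗ[R] Abelian.Ext.{u} (ModuleCat.of R E) (ModuleCat.of R (S →ₗ[R] N)) (n + 1)) := by
  have hz : g ∘ₗ f = 0 := hfg.linearMap_comp_eq_zero
  let T : ShortComplex (ModuleCat.{u} R) :=
    { X₁ := ModuleCat.of R K
      X₂ := ModuleCat.of R P
      X₃ := ModuleCat.of R E
      f := ModuleCat.ofHom f
      g := ModuleCat.ofHom g
      zero := by
        rw [← ModuleCat.ofHom_comp, hz]
        rfl }
  have hT : T.ShortExact := ModuleCat.shortComplex_shortExact T hfg hf hg
  let T' : ShortComplex (ModuleCat.{u} R) :=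
    { X₁ := ModuleCat.of R (TensorProduct R S K)
      X₂ := ModuleCat.of R (TensorProduct R S P)
      X₃ := ModuleCat.of R (TensorProduct R S E)
      f := ModuleCat.ofHom (f.lTensor S)
      g := ModuleCat.ofHom (g.lTensor S)
      zero := by
        rw [← ModuleCat.ofHom_comp, ← LinearMap.lTensor_comp, hz, LinearMap.lTensor_zero]
        rfl }
  have hT' : T'.ShortExact := ModuleCat.shortComplex_shortExact T'
    (lT_exact R S K P E f g hfg hg)
    (Module.Flat.lTensor_preserves_injective_linearMap f hf)
    (LinearMap.lTensor_surjective S hg)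
  cases n with
  | zero =>
    refine nonempty_equiv_of_ker_eq
      (extDelta R hT' (ModuleCat.of R N) ∘ₗ (adjHom R S N K).toLinearMap)
      (extDelta R hT (ModuleCat.of R (S →ₗ[R] N)))
      ((extDelta_surjective R hT' _ hX').comp (adjHom R S N K).surjective)
      (extDelta_surjective R hT _ hX) fun a => ?_
    rw [extDelta_eq_zero]
    refine (extDelta_eq_zero R hT' _ _).trans ?_
    constructor
    · rintro ⟨b, hb⟩
      obtain ⟨b, rfl⟩ := (adjHom R S N P).surjective b
      refine ⟨b, (adjHom R S N K).injective ?_⟩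
      exact (adjHom_naturality R S N _ _ f b).trans hb
    · rintro ⟨b, hb⟩
      refine ⟨adjHom R S N P b, ?_⟩
      rw [← hb]
      exact (adjHom_naturality R S N _ _ f b).symm
  | succ n =>
    obtain ⟨e1⟩ := ext_shift_s7 R hT' _ n hX'
    obtain ⟨e2⟩ := ext_shift_s7 R hT _ n hX
    obtain ⟨e3⟩ := ih
    exact ⟨e1.symm ≪≫ₗ e3 ≪≫ₗ e2⟩

theorem ext_adj_step' (R : Type u) [CommRing R] (S N P E : Type u) [AddCommGroup S] [Module R S]
    [Module.Flat R S] [AddCommGroup N] [Module R N]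
    [AddCommGroup P] [Module R P] [AddCommGroup E] [Module R E]
    (g : P →ₗ[R] E) (hg : Function.Surjective g)
    (hX : ∀ n, Subsingleton
      (Abelian.Ext.{u} (ModuleCat.of R P) (ModuleCat.of R (S →ₗ[R] N)) (n + 1)))
    (hX' : ∀ n, Subsingleton
      (Abelian.Ext.{u} (ModuleCat.of R (TensorProduct R S P)) (ModuleCat.of R N) (n + 1)))
    (n : ℕ)
    (ih : ∀ (K : Type u) [AddCommGroup K] [Module R K],
      Nonempty (Abelian.Ext.{u} (ModuleCat.of R (TensorProduct R S K)) (ModuleCat.of R N) n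
      ≃ₗ[R] Abelian.Ext.{u} (ModuleCat.of R K) (ModuleCat.of R (S →ₗ[R] N)) n)) :
    Nonempty (Abelian.Ext.{u} (ModuleCat.of R (TensorProduct R S E)) (ModuleCat.of R N) (n + 1)
      ≃ₗ[R] Abelian.Ext.{u} (ModuleCat.of R E) (ModuleCat.of R (S →ₗ[R] N)) (n + 1)) :=
  ext_adj_step R S N (LinearMap.ker g) P E (LinearMap.ker g).subtype g
    (LinearMap.ker g).injective_subtype g.exact_subtype_ker_map hg hX hX' n (ih _)

theorem ext_adj (R : Type u) [CommRing R] (S N : Type u) [AddCommGroup S] [Module R S]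
    [Module.Flat R S] [AddCommGroup N] [Module R N]
    (h : ∀ n, Subsingleton (Abelian.Ext.{u} (ModuleCat.of R S) (ModuleCat.of R N) (n + 1)))
    (n : ℕ) : ∀ (E : Type u) [AddCommGroup E] [Module R E],
    Nonempty (Abelian.Ext.{u} (ModuleCat.of R (TensorProduct R S E)) (ModuleCat.of R N) n ≃ₗ[R]
      Abelian.Ext.{u} (ModuleCat.of R E) (ModuleCat.of R (S →ₗ[R] N)) n) := by
  induction n with
  | zero =>
    intro E _ _
    exact ⟨Ext.linearEquiv₀ ≪≫ₗ (adjHom R S N E).symm ≪≫ₗ Ext.linearEquiv₀.symm⟩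
  | succ n ih =>
    intro E _ _
    obtain ⟨p, hp⟩ : ∃ p : (E →₀ R) →ₗ[R] E, Function.Surjective p :=
      ⟨Finsupp.linearCombination R id, Finsupp.linearCombination_id_surjective R E⟩
    have hX : ∀ n, Subsingleton (Abelian.Ext.{u} (ModuleCat.of R (E →₀ R))
        (ModuleCat.of R (S →ₗ[R] N)) (n + 1)) := by
      intro n
      have : Projective (ModuleCat.of R (E →₀ R)) :=
        ModuleCat.projective_of_free (Finsupp.basisSingleOne (R := R))
      exact subsingleton_of_forall_eq 0 fun α => Ext.eq_zero_of_projective α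
    have hX' : ∀ n, Subsingleton (Abelian.Ext.{u} (ModuleCat.of R (TensorProduct R S (E →₀ R)))
        (ModuleCat.of R N) (n + 1)) :=
      fun n => ext_tensor_free_eq_zero R S N E n (h n)
    exact ext_adj_step' R S N (E →₀ R) E p hp hX hX' n ih

end Helpers

/-- Let `R` be a commutative noetherian ring, `S` a flat (commutative) `R`-algebra, and
`N` an `R`-module with `Ext_R^n(S,N) = 0` for all `n > 0`.  Then for every `R`-module `E`
and every `n ≥ 0` there is an isomorphism
`Ext_R^n(S ⊗_R E, N) ≅ Ext_R^n(E, Hom_R(S,N))`. -/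
theorem ext_tensor_iso_ext_hom
    (R : Type u) [CommRing R] [IsNoetherianRing R]
    (S : Type u) [CommRing S] [Algebra R S] [Module.Flat R S]
    (N : Type u) [AddCommGroup N] [Module R N]
    (hext : ∀ n : ℕ, 0 < n → Subsingleton (extmod R S N n))
    (E : Type u) [AddCommGroup E] [Module R E] (n : ℕ) :
    Nonempty (extmod R (TensorProduct R S E) N n ≅ extmod R E (S →ₗ[R] N) n) := by
  have h : ∀ n, Subsingleton
      (CategoryTheory.Abelian.Ext.{u} (ModuleCat.of R S) (ModuleCat.of R N) (n + 1)) := by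
    intro n
    obtain ⟨e⟩ := ext_bridge R (ModuleCat.of R S) (ModuleCat.of R N) (n + 1)
    have h1 := hext (n + 1) n.succ_pos
    unfold extmod at h1
    exact e.symm.injective.subsingleton
  obtain ⟨e1⟩ := ext_bridge R (ModuleCat.of R (TensorProduct R S E)) (ModuleCat.of R N) n
  obtain ⟨e2⟩ := ext_adj R S N h n E
  obtain ⟨e3⟩ := ext_bridge R (ModuleCat.of R E) (ModuleCat.of R (S →ₗ[R] N)) n
  exact ⟨(e1 ≪≫ₗ e2 ≪≫ₗ e3.symm).toModuleIso⟩
end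

section
/- Let R be a commutative noetherian ring and S a faithfully flat R-algebra. If X is an R-complex such that the complex RHom_R(S,X) is acyclic, then X is acyclic. In particular, an R-module N with Hom_R(S,N) = 0 and Ext_R^n(S,N) = 0 for all n > 0 is the zero module. -/
/-!
Common definitions: `extmod R M N n` is the `n`-th Ext module `Ext_R^n(M,N)`.
-/

open CategoryTheory

universe u

/-- A homological complex is acyclic if it is exact in every degree, i.e. all its
homology vanishes. -/
def isAcyclic {R : Type u} [CommRing R] {ι : Type*} {c : ComplexShape ι}
    (K : HomologicalComplex (ModuleCat.{u} R) c) : Prop :=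
  ∀ i, K.ExactAt i

/-- A `ℤ`-indexed chain complex `I` of `R`-modules is *semi-injective* if every component
`I_n` is an injective `R`-module and the functor `Hom_R(-, I)` preserves acyclicity;
equivalently (as formalized here), every chain map from an acyclic complex to `I` is
null-homotopic. -/
def SemiInjective (R : Type u) [CommRing R] (I : ChainComplex (ModuleCat.{u} R) ℤ) : Prop :=
  (∀ n : ℤ, Injective (I.X n)) ∧
    ∀ M : ChainComplex (ModuleCat.{u} R) ℤ, isAcyclic M → ∀ f : M ⟶ I, Nonempty (Homotopy f 0)

/-- The complex `Hom_R(M, I)` obtained by applying the functor `Hom_R(M, -)` degreewise to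
a `ℤ`-indexed chain complex `I` of `R`-modules. -/
noncomputable def homComplex {R : Type u} [CommRing R] (M : ModuleCat.{u} R)
    (I : ChainComplex (ModuleCat.{u} R) ℤ) : ChainComplex (ModuleCat.{u} R) ℤ :=
  (((linearCoyoneda R (ModuleCat.{u} R)).obj (Opposite.op M)).mapHomologicalComplex _).obj I


open TensorProduct

section part1

variable {R : Type u} [CommRing R]

lemma exactAt_succ_iff (K : ChainComplex (ModuleCat.{u} R) ℤ) (n : ℤ) :
    K.ExactAt (n+1) ↔ ∀ x : K.X (n+1), (K.d (n+1) n).hom x = 0 →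
      ∃ y : K.X (n+1+1), (K.d (n+1+1) (n+1)).hom y = x := by
  rw [K.exactAt_iff' (n+1+1) (n+1) n (by simp) (by simp), ShortComplex.moduleCat_exact_iff]
  rfl

lemma isAcyclic_iff' (K : ChainComplex (ModuleCat.{u} R) ℤ) :
    isAcyclic K ↔ ∀ (n : ℤ) (x : K.X (n+1)), (K.d (n+1) n).hom x = 0 →
      ∃ y : K.X (n+1+1), (K.d (n+1+1) (n+1)).hom y = x := by
  constructor
  · intro h n
    exact (exactAt_succ_iff K n).1 (h _)
  · intro h i
    obtain ⟨n, rfl⟩ : ∃ n, i = n + 1 := ⟨i - 1, by ring⟩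
    exact (exactAt_succ_iff K n).2 (h n)

lemma dd_apply (K : ChainComplex (ModuleCat.{u} R) ℤ) (i j k : ℤ) (x : K.X i) :
    (K.d j k).hom ((K.d i j).hom x) = 0 := by
  have : (K.d i j ≫ K.d j k).hom x = 0 := by
    rw [K.d_comp_d]; rfl
  exact this

lemma semiInj_null {I : ChainComplex (ModuleCat.{u} R) ℤ} (hI : SemiInjective R I)
    (M : ChainComplex (ModuleCat.{u} R) ℤ) (hM : isAcyclic M) (f : M ⟶ I) :
    ∃ h : ∀ n : ℤ, M.X n →ₗ[R] I.X (n+1), ∀ (n : ℤ) (x : M.X (n+1)),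
      (f.f (n+1)).hom x = (I.d (n+1+1) (n+1)).hom (h (n+1) x) + h n ((M.d (n+1) n).hom x) := by
  obtain ⟨H⟩ := hI.2 M hM f
  refine ⟨fun n => (H.hom n (n+1)).hom, fun n x => ?_⟩
  have h1 := H.comm (n+1)
  rw [dNext_eq H.hom (show (ComplexShape.down ℤ).Rel (n+1) n by simp),
    prevD_eq H.hom (show (ComplexShape.down ℤ).Rel (n+1+1) (n+1) by simp)] at h1
  rw [h1]
  simp [add_comm]

lemma semiInj_ext {I : ChainComplex (ModuleCat.{u} R) ℤ} (hI : SemiInjective R I) (n : ℤ)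
    {A B : Type u} [AddCommGroup A] [Module R A] [AddCommGroup B] [Module R B]
    (f : A →ₗ[R] B) (hf : Function.Injective f) (g : A →ₗ[R] I.X n) :
    ∃ h : B →ₗ[R] I.X n, ∀ x, h (f x) = g x := by
  have h1 : Module.Injective R (I.X n) :=
    (Module.injective_iff_injective_object R (I.X n)).2 (hI.1 n)
  exact h1.out f hf g

/-- `Hom_R(M, I)` is exact, in terms of elements. -/
def TMod (I : ChainComplex (ModuleCat.{u} R) ℤ) (M : Type u) [AddCommGroup M] [Module R M] :
    Prop :=
  ∀ (n : ℤ) (g : M →ₗ[R] I.X (n+1)), (∀ x, (I.d (n+1) n).hom (g x) = 0) →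
    ∃ h : M →ₗ[R] I.X (n+1+1), ∀ x, (I.d (n+1+1) (n+1)).hom (h x) = g x

/-- `Hom_R(R/a, I)` is exact, in terms of elements. -/
def TIdeal (I : ChainComplex (ModuleCat.{u} R) ℤ) (a : Ideal R) : Prop :=
  ∀ (n : ℤ) (x : I.X (n+1)), (∀ r ∈ a, r • x = 0) → (I.d (n+1) n).hom x = 0 →
    ∃ y : I.X (n+1+1), (∀ r ∈ a, r • y = 0) ∧ (I.d (n+1+1) (n+1)).hom y = x

lemma tmod_of_homComplex (I : ChainComplex (ModuleCat.{u} R) ℤ) (M : Type u) [AddCommGroup M]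
    [Module R M] : isAcyclic (homComplex (ModuleCat.of R M) I) ↔ TMod I M := by
  rw [isAcyclic_iff']
  constructor
  · intro h n g hg
    obtain ⟨y, hy⟩ := h n (ModuleCat.ofHom g) (by
      apply ModuleCat.hom_ext
      ext x
      exact hg x)
    refine ⟨ModuleCat.Hom.hom y, fun x => ?_⟩
    exact congrArg (fun f : ModuleCat.of R M ⟶ I.X (n+1) => f.hom x) hy
  · intro h n g hg
    obtain ⟨y, hy⟩ := h n (ModuleCat.Hom.hom g) (fun x =>
      congrArg (fun f : ModuleCat.of R M ⟶ I.X n => f.hom x) hg)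
    refine ⟨ModuleCat.ofHom y, ?_⟩
    apply ModuleCat.hom_ext
    ext x
    exact hy x

/-- The complex `Hom_R(S, I) ⊗ S`. -/
noncomputable def homTensor (I : ChainComplex (ModuleCat.{u} R) ℤ) (S : Type u) [AddCommGroup S]
    [Module R S] : ChainComplex (ModuleCat.{u} R) ℤ where
  X n := ModuleCat.of R ((S →ₗ[R] I.X n) ⊗[R] S)
  d i j := ModuleCat.ofHom (LinearMap.rTensor S (LinearMap.compRight R (I.d i j).hom))
  shape i j hij := by
    apply ModuleCat.hom_ext
    apply TensorProduct.ext'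
    intro x y
    have : LinearMap.compRight (M := S) R (I.d i j).hom x = 0 := by
      ext; simp [I.shape i j hij]
    simp [this]
  d_comp_d' i j k _ _ := by
    apply ModuleCat.hom_ext
    apply TensorProduct.ext'
    intro x y
    have : LinearMap.compRight (M := S) R (I.d j k).hom
        (LinearMap.compRight R (I.d i j).hom x) = 0 := by
      ext; simp [dd_apply]
    exact (congrArg (fun t => t ⊗ₜ[R] y) this).trans (TensorProduct.zero_tmul _ _)

/-- evaluation -/
noncomputable def homTensorEv (I : ChainComplex (ModuleCat.{u} R) ℤ) (S : Type u) [AddCommGroup S]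
    [Module R S] : homTensor I S ⟶ I where
  f n := ModuleCat.ofHom (TensorProduct.lift (LinearMap.id (M := S →ₗ[R] I.X n)))
  comm' i j _ := by
    apply ModuleCat.hom_ext
    apply TensorProduct.ext'
    intro x y
    simp [homTensor]

lemma homTensor_acyclic (I : ChainComplex (ModuleCat.{u} R) ℤ) (S : Type u) [AddCommGroup S]
    [Module R S] [Module.Flat R S] (h : TMod I S) : isAcyclic (homTensor I S) := by
  rw [isAcyclic_iff']
  intro n
  have h1 : Function.Exact (LinearMap.compRight (M := S) R (I.d (n+1+1) (n+1)).hom)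
      (LinearMap.compRight (M := S) R (I.d (n+1) n).hom) := by
    intro g
    constructor
    · intro hg
      obtain ⟨k, hk⟩ := h n g (fun x => congrArg (fun f : S →ₗ[R] I.X n => f x) hg)
      exact ⟨k, by ext x; exact hk x⟩
    · rintro ⟨k, rfl⟩
      ext x
      simp [dd_apply]
  have h2 := Module.Flat.rTensor_exact S h1
  intro x hx
  exact (h2 x).1 hx

lemma tmod_tensor {I : ChainComplex (ModuleCat.{u} R) ℤ} (hI : SemiInjective R I) (S : Type u)
    [AddCommGroup S] [Module R S] [Module.Flat R S] (h : TMod I S) (M : Type u) [AddCommGroup M]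
    [Module R M] : TMod I (M ⊗[R] S) := by
  obtain ⟨h, hh⟩ := semiInj_null hI _ (homTensor_acyclic I S h) (homTensorEv I S)
  intro n g hg
  let G : M ⊗[R] S →ₗ[R] (S →ₗ[R] I.X (n+1)) ⊗[R] S :=
    LinearMap.rTensor S (TensorProduct.curry g)
  refine ⟨(h (n+1)) ∘ₗ G, fun x => ?_⟩
  have h1 := hh n (G x)
  have e2 : TensorProduct.lift (LinearMap.id (M := S →ₗ[R] I.X (n+1))) ∘ₗ G = g :=
    TensorProduct.ext' (fun m s => rfl)
  have h2 : ((homTensorEv I S).f (n+1)).hom (G x) = g x := LinearMap.congr_fun e2 x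
  have e3 : LinearMap.rTensor S (LinearMap.compRight R (I.d (n+1) n).hom) ∘ₗ G = 0 := by
    apply TensorProduct.ext'
    intro m s
    have : LinearMap.compRight (M := S) R (I.d (n+1) n).hom (TensorProduct.curry g m) = 0 := by
      ext s; simp [hg]
    exact (congrArg (fun t => t ⊗ₜ[R] s) this).trans (TensorProduct.zero_tmul _ _)
  have h3 : ((homTensor I S).d (n+1) n).hom (G x) = 0 := LinearMap.congr_fun e3 x
  rw [h2, h3, map_zero, add_zero] at h1
  exact h1.symm

lemma tmod_residueField {I : ChainComplex (ModuleCat.{u} R) ℤ} (hI : SemiInjective R I)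
    (S : Type u) [CommRing S] [Algebra R S] [Module.FaithfullyFlat R S] (h : TMod I S)
    (p : Ideal R) [p.IsPrime] : TMod I p.ResidueField := by
  have hT := tmod_tensor hI S h p.ResidueField
  have hnt : Nontrivial (p.ResidueField ⊗[R] S) := inferInstance
  let i : p.ResidueField →ₐ[p.ResidueField] p.ResidueField ⊗[R] S := Algebra.ofId _ _
  have hi : Function.Injective i := i.toRingHom.injective
  obtain ⟨e, he⟩ := i.toLinearMap.exists_leftInverse_of_injective (LinearMap.ker_eq_bot.2 hi)
  intro n g hg
  obtain ⟨k, hk⟩ := hT n (g ∘ₗ e.restrictScalars R) (fun x => hg _)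
  refine ⟨k ∘ₗ i.toLinearMap.restrictScalars R, fun x => ?_⟩
  have h1 : e (i x) = x := LinearMap.congr_fun he x
  simpa [h1] using hk (i x)

lemma divisible {I : ChainComplex (ModuleCat.{u} R) ℤ} (hI : SemiInjective R I) (n : ℤ)
    (a : Ideal R) (x : R) (w : I.X n) (hw : ∀ r, x • r ∈ a → r • w = 0) :
    ∃ w' : I.X n, (∀ r ∈ a, r • w' = 0) ∧ x • w' = w := by
  let b : Ideal R := Submodule.comap (LinearMap.lsmul R R x) a
  let f : R ⧸ b →ₗ[R] R ⧸ a := Submodule.mapQ b a (LinearMap.lsmul R R x) le_rfl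
  have hf : Function.Injective f := by
    rw [← LinearMap.ker_eq_bot, LinearMap.ker_eq_bot']
    intro m hm
    obtain ⟨m, rfl⟩ := Submodule.mkQ_surjective b m
    rw [Submodule.mkQ_apply] at *
    erw [Submodule.mapQ_apply, Submodule.Quotient.mk_eq_zero] at hm
    exact (Submodule.Quotient.mk_eq_zero _).2 hm
  let g : R ⧸ b →ₗ[R] I.X n := Submodule.liftQ b (LinearMap.toSpanSingleton R _ w) (by
    intro r hr
    exact hw r hr)
  obtain ⟨h, hh⟩ := semiInj_ext hI n f hf g
  refine ⟨h (Submodule.mkQ a 1), fun r hr => ?_, ?_⟩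
  · rw [← map_smul, ← map_smul]
    have : Submodule.mkQ a (r • (1:R)) = 0 := by
      rw [Submodule.mkQ_apply, Submodule.Quotient.mk_eq_zero]
      simpa using hr
    rw [this, map_zero]
  · have := hh (Submodule.mkQ b 1)
    have h2 : f (Submodule.mkQ b 1) = x • Submodule.mkQ a 1 := rfl
    rw [h2, map_smul] at this
    rw [this]
    exact one_smul R w

lemma tideal_step {I : ChainComplex (ModuleCat.{u} R) ℤ} (hI : SemiInjective R I)
    (a : Ideal R) (x : R) (h1 : TIdeal I (Submodule.comap (LinearMap.lsmul R R x) a))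
    (h2 : TIdeal I (a ⊔ Ideal.span {x})) : TIdeal I a := by
  intro n z hz hdz
  obtain ⟨w, hw, hdw⟩ := h1 n (x • z) (fun r hr => by
    rw [smul_smul, mul_comm]; exact hz _ hr) (by rw [map_smul, hdz, smul_zero])
  obtain ⟨w', hw', hxw⟩ := divisible hI _ a x w hw
  obtain ⟨v, hv, hdv⟩ := h2 n (z - (I.d (n+1+1) (n+1)).hom w') (by
    intro r hr
    obtain ⟨r1, hr1, r2, hr2, rfl⟩ := Submodule.mem_sup.1 hr
    obtain ⟨c, rfl⟩ := Ideal.mem_span_singleton'.1 hr2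
    rw [add_smul, smul_sub, hz _ hr1, ← map_smul, hw' _ hr1, map_zero, sub_zero, zero_add,
      mul_smul, smul_sub, ← map_smul, hxw, hdw, sub_self, smul_zero]) (by
    rw [map_sub, hdz, dd_apply, sub_zero])
  refine ⟨w' + v, fun r hr => ?_, ?_⟩
  · rw [smul_add, hw' r hr, hv r (Ideal.mem_sup_left hr), add_zero]
  · rw [map_add, hdv]; abel

end part1

section part1b

variable {R : Type u} [CommRing R]

/-- subcomplex of a complex of modules -/
noncomputable def subCx (I : ChainComplex (ModuleCat.{u} R) ℤ) (N : ∀ n, Submodule R (I.X n))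
    (hN : ∀ i j, ∀ x ∈ N i, (I.d i j).hom x ∈ N j) : ChainComplex (ModuleCat.{u} R) ℤ where
  X n := ModuleCat.of R (N n)
  d i j := ModuleCat.ofHom ((I.d i j).hom.restrict (hN i j))
  shape i j hij := by
    apply ModuleCat.hom_ext
    ext x
    simp [I.shape i j hij]
  d_comp_d' i j k _ _ := by
    apply ModuleCat.hom_ext
    ext x
    exact dd_apply I i j k x

/-- inclusion of a subcomplex -/
noncomputable def subCxIncl (I : ChainComplex (ModuleCat.{u} R) ℤ) (N : ∀ n, Submodule R (I.X n))
    (hN : ∀ i j, ∀ x ∈ N i, (I.d i j).hom x ∈ N j) : subCx I N hN ⟶ I where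
  f n := ModuleCat.ofHom (N n).subtype
  comm' i j _ := by
    apply ModuleCat.hom_ext
    ext x
    rfl

/-- elements killed by `p` -/
def pTor (M : Type u) [AddCommGroup M] [Module R M] (p : Ideal R) : Submodule R M where
  carrier := {x | ∀ r ∈ p, r • x = 0}
  zero_mem' r _ := smul_zero r
  add_mem' {x y} hx hy r hr := by rw [smul_add, hx r hr, hy r hr, add_zero]
  smul_mem' c x hx r hr := by rw [smul_comm, hx r hr, smul_zero]

/-- elements killed by `p` and by some element outside `p` -/
def pTorTor (M : Type u) [AddCommGroup M] [Module R M] (p : Ideal R) [p.IsPrime] :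
    Submodule R M where
  carrier := {x | (∀ r ∈ p, r • x = 0) ∧ ∃ s, s ∉ p ∧ s • x = 0}
  zero_mem' := ⟨fun r _ => smul_zero r, 1, p.one_notMem, smul_zero _⟩
  add_mem' := by
    rintro x y ⟨hx, s, hs, hsx⟩ ⟨hy, t, ht, hty⟩
    refine ⟨(pTor M p).add_mem hx hy, s * t, p.primeCompl.mul_mem hs ht, ?_⟩
    rw [smul_add, mul_smul, mul_smul, hty, smul_comm, hsx]; simp
  smul_mem' := by
    rintro c x ⟨hx, s, hs, hsx⟩
    exact ⟨(pTor M p).smul_mem c hx, s, hs, by rw [smul_comm, hsx, smul_zero]⟩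

lemma isLocalizedModule_residueField (p : Ideal R) [p.IsPrime] :
    IsLocalizedModule p.primeCompl
      (IsScalarTower.toAlgHom R (R ⧸ p) p.ResidueField).toLinearMap where
  map_units s := by
    have hs : algebraMap R p.ResidueField s ≠ 0 := fun h =>
      s.2 ((Ideal.algebraMap_residueField_eq_zero).1 h)
    rw [Module.End.isUnit_iff]
    constructor
    · intro x y hxy
      simp only [Module.algebraMap_end_apply, Algebra.smul_def] at hxy
      exact mul_left_cancel₀ hs hxy
    · intro x
      refine ⟨(algebraMap R p.ResidueField s)⁻¹ * x, ?_⟩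
      simp only [Module.algebraMap_end_apply, Algebra.smul_def]
      rw [mul_inv_cancel_left₀ hs]
  surj k := by
    obtain ⟨a, b, hb, rfl⟩ := IsFractionRing.div_surjective (A := R ⧸ p) k
    obtain ⟨s, rfl⟩ := Ideal.Quotient.mk_surjective b
    have hs : s ∉ p := fun h => (mem_nonZeroDivisors_iff_ne_zero.1 hb)
      (Ideal.Quotient.eq_zero_iff_mem.2 h)
    have hs' : algebraMap R p.ResidueField s ≠ 0 := fun h =>
      hs ((Ideal.algebraMap_residueField_eq_zero).1 h)
    refine ⟨(a, ⟨s, hs⟩), ?_⟩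
    change s • _ = algebraMap (R ⧸ p) p.ResidueField a
    rw [Algebra.smul_def, Ideal.algebraMap_quotient_residueField_mk]
    field_simp
  exists_of_eq {x y} h := ⟨1, by
    rw [p.injective_algebraMap_quotient_residueField h]⟩

lemma tideal_prime {I : ChainComplex (ModuleCat.{u} R) ℤ} (hI : SemiInjective R I)
    (p : Ideal R) [hp : p.IsPrime] (hK : TMod I p.ResidueField)
    (hind : ∀ s, s ∉ p → TIdeal I (p ⊔ Ideal.span {s})) : TIdeal I p := by
  have hN : ∀ i j, ∀ x ∈ pTorTor (I.X i) p, (I.d i j).hom x ∈ pTorTor (I.X j) p := by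
    rintro i j x ⟨hx, s, hs, hsx⟩
    exact ⟨fun r hr => by rw [← map_smul, hx r hr, map_zero], s, hs, by
      rw [← map_smul, hsx, map_zero]⟩
  have hac : isAcyclic (subCx I _ hN) := by
    rw [isAcyclic_iff']
    rintro n ⟨x, hx, s, hs, hsx⟩ hdx
    have hdx' : (I.d (n+1) n).hom x = 0 := congrArg Subtype.val hdx
    obtain ⟨y, hy, hdy⟩ := hind s hs n x (by
      intro r hr
      obtain ⟨r1, hr1, r2, hr2, rfl⟩ := Submodule.mem_sup.1 hr
      obtain ⟨c, rfl⟩ := Ideal.mem_span_singleton'.1 hr2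
      rw [add_smul, hx _ hr1, mul_smul, hsx, smul_zero, add_zero]) hdx'
    exact ⟨⟨y, fun r hr => hy r (Ideal.mem_sup_left hr), s, hs,
      hy s (Ideal.mem_sup_right (Ideal.mem_span_singleton_self s))⟩, Subtype.ext hdy⟩
  obtain ⟨h, hh⟩ := semiInj_null hI _ hac (subCxIncl I _ hN)
  have hext : ∀ n : ℤ, ∃ H : I.X n →ₗ[R] I.X (n+1), ∀ x : pTorTor (I.X n) p,
      H x = h n x := fun n =>
    semiInj_ext hI (n+1) (pTorTor (I.X n) p).subtype Subtype.val_injective (h n)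
  choose H hH using hext
  let ρ : ∀ n : ℤ, I.X (n+1) →ₗ[R] I.X (n+1) := fun n =>
    LinearMap.id - (I.d (n+1+1) (n+1)).hom ∘ₗ H (n+1) - H n ∘ₗ (I.d (n+1) n).hom
  have hρ : ∀ n x, ρ n x = x - (I.d (n+1+1) (n+1)).hom (H (n+1) x)
      - H n ((I.d (n+1) n).hom x) := fun n x => rfl
  have hρ0 : ∀ n, ∀ x ∈ pTorTor (I.X (n+1)) p, ρ n x = 0 := by
    intro n x hx
    have h1 := hh n ⟨x, hx⟩
    have h2 := hH (n+1) ⟨x, hx⟩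
    have h3 := hH n ⟨_, hN _ n x hx⟩
    rw [hρ]
    have h1' : x = (I.d (n+1+1) (n+1)).hom (h (n+1) ⟨x, hx⟩) + h n ⟨_, hN _ n x hx⟩ := h1
    rw [← h2, ← h3] at h1'
    rw [sub_sub, ← h1', sub_self]
  have hρd : ∀ n x, (I.d (n+1+1) (n+1)).hom (ρ (n+1) x) = ρ n ((I.d (n+1+1) (n+1)).hom x) := by
    intro n x
    rw [hρ, hρ, map_sub, map_sub, dd_apply, dd_apply, map_zero]
    abel
  intro n' z hz hdz
  obtain ⟨n, rfl⟩ : ∃ n, n' = n + 1 := ⟨n' - 1, by ring⟩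
  let Y := pTor (I.X (n+1+1)) p
  let T : Submodule R Y := (pTorTor (I.X (n+1+1)) p).comap Y.subtype
  have hunit : ∀ s : p.primeCompl, IsUnit (algebraMap R (Module.End R (Y ⧸ T)) s) := by
    rintro ⟨s, hs⟩
    rw [Module.End.isUnit_iff]
    constructor
    · rw [← LinearMap.ker_eq_bot, LinearMap.ker_eq_bot']
      intro m hm
      obtain ⟨y, rfl⟩ := T.mkQ_surjective m
      have hm' : T.mkQ (s • y) = 0 := hm
      rw [Submodule.mkQ_apply, Submodule.Quotient.mk_eq_zero] at hm' ⊢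
      obtain ⟨-, t, ht, hty⟩ := hm'
      refine ⟨y.2, t * s, p.primeCompl.mul_mem ht hs, ?_⟩
      rw [mul_smul]
      exact hty
    · intro m
      obtain ⟨y, rfl⟩ := T.mkQ_surjective m
      obtain ⟨w, hw, hsw⟩ := divisible hI _ p s y.1 (fun r hr =>
        y.2 r ((hp.mem_or_mem hr).resolve_left hs))
      refine ⟨T.mkQ ⟨w, hw⟩, ?_⟩
      change s • T.mkQ ⟨w, hw⟩ = _
      rw [← map_smul]
      congr 1
      exact Subtype.ext hsw
  let z' : Y := ⟨z, hz⟩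
  let g : R ⧸ p →ₗ[R] Y ⧸ T := Submodule.liftQ p (LinearMap.toSpanSingleton R _ (T.mkQ z')) (by
    intro r hr
    change r • T.mkQ z' = 0
    rw [← map_smul]
    have : r • z' = 0 := Subtype.ext (hz r hr)
    rw [this, map_zero])
  let f := (IsScalarTower.toAlgHom R (R ⧸ p) p.ResidueField).toLinearMap
  have hf : IsLocalizedModule p.primeCompl f := isLocalizedModule_residueField p
  let L : p.ResidueField →ₗ[R] Y ⧸ T := IsLocalizedModule.lift p.primeCompl f g hunit
  have hL : ∀ x, L (f x) = g x := fun x => IsLocalizedModule.lift_apply p.primeCompl f g hunit x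
  let ρ' : Y ⧸ T →ₗ[R] I.X (n+1+1) := T.liftQ (ρ (n+1) ∘ₗ Y.subtype) (by
    intro y hy
    exact hρ0 _ _ hy)
  have hρ' : ∀ y : Y, ρ' (T.mkQ y) = ρ (n+1) y.1 := fun y => rfl
  obtain ⟨k, hk⟩ := hK (n+1) (ρ' ∘ₗ L) (by
    intro x
    obtain ⟨⟨a, s⟩, has⟩ := hf.surj x
    obtain ⟨a, rfl⟩ := Ideal.Quotient.mk_surjective a
    obtain ⟨y, hy⟩ := T.mkQ_surjective (L x)
    have h1 : T.mkQ (s.1 • y) = T.mkQ (a • z') := by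
      rw [map_smul, hy, ← map_smul]
      have := congrArg L has
      rw [hL] at this
      exact this
    have h2 : s.1 • y - a • z' ∈ T := (Submodule.Quotient.eq T).1 h1
    have h3 := hN _ (n+1) _ h2
    have h4 : (I.d (n+1+1) (n+1)).hom (Y.subtype (s.1 • y - a • z'))
        = s.1 • (I.d (n+1+1) (n+1)).hom y.1 := by
      change (I.d (n+1+1) (n+1)).hom (s.1 • y.1 - a • z) = _
      rw [map_sub, map_smul, map_smul, hdz, smul_zero, sub_zero]
    rw [h4] at h3
    obtain ⟨-, t, ht, hty⟩ := h3
    have h5 : (I.d (n+1+1) (n+1)).hom y.1 ∈ pTorTor (I.X (n+1)) p :=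
      ⟨fun r hr => by rw [← map_smul, y.2 r hr, map_zero], t * s.1,
        p.primeCompl.mul_mem ht s.2, by rw [mul_smul, hty]⟩
    rw [LinearMap.comp_apply, ← hy, hρ', hρd, hρ0 _ _ h5])
  have h1 := hk 1
  have h2 : L 1 = T.mkQ z' := by
    have h3 := hL 1
    have h4 : f 1 = 1 := map_one (algebraMap (R ⧸ p) p.ResidueField)
    rw [h4] at h3
    rw [h3]
    exact one_smul R (T.mkQ z')
  rw [LinearMap.comp_apply, h2, hρ', hρ] at h1
  change _ = z - (I.d (n+1+1+1) (n+1+1)).hom (H (n+1+1) z) - H (n+1) ((I.d (n+1+1) (n+1)).hom z)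
    at h1
  rw [hdz, map_zero, sub_zero] at h1
  refine ⟨k 1 + H (n+1+1) z, fun r hr => ?_, ?_⟩
  · rw [smul_add, ← map_smul, ← map_smul, hz r hr, map_zero, add_zero, Algebra.smul_def,
      (Ideal.algebraMap_residueField_eq_zero).2 hr, zero_mul, map_zero]
  · rw [map_add, h1]; abel

lemma acyclic_core [IsNoetherianRing R] {I : ChainComplex (ModuleCat.{u} R) ℤ}
    (hI : SemiInjective R I) (S : Type u) [CommRing S] [Algebra R S] [Module.FaithfullyFlat R S]
    (h : TMod I S) : isAcyclic I := by
  have key : ∀ a : Ideal R, TIdeal I a := by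
    intro a
    induction a using IsNoetherian.induction with
    | hgt a ih =>
    change Ideal R at a
    have hlt : ∀ s, s ∉ a → a < a ⊔ Ideal.span {s} := fun s hs =>
      lt_of_le_of_ne le_sup_left (fun e => hs (by
        rw [e]; exact Ideal.mem_sup_right (Ideal.mem_span_singleton_self s)))
    by_cases hp : Ideal.IsPrime a
    · exact tideal_prime hI a (tmod_residueField hI S h a) (fun s hs => ih _ (hlt s hs))
    · by_cases ht : a = ⊤
      · intro n x hx _
        have : x = 0 := by simpa using hx 1 (by rw [ht]; trivial)
        exact ⟨0, by simp, by rw [this, map_zero]⟩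
      · have : ∃ x y, x * y ∈ a ∧ x ∉ a ∧ y ∉ a := by
          by_contra hc
          push Not at hc
          refine hp ⟨ht, fun {x y} hxy => ?_⟩
          by_cases hx : x ∈ a
          · exact Or.inl hx
          · exact Or.inr (hc x y hxy hx)
        obtain ⟨x, y, hxy, hx, hy⟩ := this
        refine tideal_step hI a x (ih _ ?_) (ih _ (hlt x hx))
        refine lt_of_le_of_ne (fun r hr => Ideal.mul_mem_left a x hr) (fun e => hy ?_)
        rw [e]
        exact hxy
  rw [isAcyclic_iff']
  intro n x hx
  obtain ⟨y, -, hy⟩ := key ⊥ n x (by rintro r (rfl : r = 0); exact zero_smul _ _) hx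
  exact ⟨y, hy⟩

end part1b

section part2

open Limits

variable {C : Type*} [Category* C] [Abelian C]

lemma shift_vanish {A N : C} (P : ProjectiveResolution A) (J : InjectiveResolution N)
    (hE : ∀ (i : ℕ) (g : P.complex.X (i+1) ⟶ N), P.complex.d (i+2) (i+1) ≫ g = 0 →
      ∃ g' : P.complex.X i ⟶ N, P.complex.d (i+1) i ≫ g' = g) (k : ℕ) :
    ∀ (i : ℕ) (g : P.complex.X (i+1) ⟶ J.cocomplex.X k), P.complex.d (i+2) (i+1) ≫ g = 0 →
      g ≫ J.cocomplex.d k (k+1) = 0 →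
      ∃ g' : P.complex.X i ⟶ J.cocomplex.X k, g' ≫ J.cocomplex.d k (k+1) = 0 ∧
        P.complex.d (i+1) i ≫ g' = g := by
  induction k with
  | zero =>
    intro i g hg hdg
    let c : P.complex.X (i+1) ⟶ N := J.exact₀.lift g hdg
    let ι0 : N ⟶ J.cocomplex.X 0 := J.ι.f 0
    have hι : ι0 ≫ J.cocomplex.d 0 1 = 0 := J.ι_f_zero_comp_complex_d
    have hm : Mono ι0 := inferInstanceAs (Mono (J.ι.f 0))
    have hc : c ≫ ι0 = g := J.exact₀.lift_f g hdg
    obtain ⟨c', hc'⟩ := hE i c (by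
      rw [← cancel_mono ι0, zero_comp, Category.assoc, hc, hg])
    refine ⟨c' ≫ ι0, ?_, ?_⟩
    · change (c' ≫ ι0) ≫ J.cocomplex.d 0 1 = 0
      rw [Category.assoc, hι, comp_zero]
    · rw [← Category.assoc, hc', hc]
  | succ k ih =>
    intro i g hg hdg
    have hJ := J.exact_succ k
    let g1 : P.complex.X (i+1) ⟶ J.cocomplex.X k := hJ.liftFromProjective g hdg
    have hg1 : g1 ≫ J.cocomplex.d k (k+1) = g := hJ.liftFromProjective_comp g hdg
    obtain ⟨w, hdw, hw⟩ := ih (i+1) (P.complex.d (i+2) (i+1) ≫ g1) (by simp)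
      (by rw [Category.assoc, hg1, hg])
    have hP := P.exact_succ i
    have hz : P.complex.d (i+2) (i+1) ≫ (g1 - w) = 0 := by
      rw [Preadditive.comp_sub, ← hw, sub_self]
    let v : P.complex.X i ⟶ J.cocomplex.X k := hP.descToInjective (g1 - w) hz
    have hv : P.complex.d (i+1) i ≫ v = g1 - w := hP.comp_descToInjective _ hz
    refine ⟨v ≫ J.cocomplex.d k (k+1), by simp, ?_⟩
    rw [← Category.assoc, hv, Preadditive.sub_comp, hdw, hg1, sub_zero]

lemma hom_exact_succ {A N : C} (P : ProjectiveResolution A) (J : InjectiveResolution N)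
    (hE : ∀ (i : ℕ) (g : P.complex.X (i+1) ⟶ N), P.complex.d (i+2) (i+1) ≫ g = 0 →
      ∃ g' : P.complex.X i ⟶ N, P.complex.d (i+1) i ≫ g' = g) (k : ℕ)
    (g : A ⟶ J.cocomplex.X (k+1)) (hdg : g ≫ J.cocomplex.d (k+1) (k+2) = 0) :
    ∃ h : A ⟶ J.cocomplex.X k, h ≫ J.cocomplex.d k (k+1) = g := by
  have hJ := J.exact_succ k
  let q : P.complex.X 0 ⟶ A := P.π.f 0
  have hq : P.complex.d 1 0 ≫ q = 0 := P.complex_d_comp_π_f_zero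
  have hqe : Epi q := inferInstanceAs (Epi (P.π.f 0))
  let α : P.complex.X 0 ⟶ J.cocomplex.X k := hJ.liftFromProjective (q ≫ g) (by
    change (q ≫ g) ≫ J.cocomplex.d (k+1) (k+2) = 0
    rw [Category.assoc, hdg, comp_zero])
  have hα : α ≫ J.cocomplex.d k (k+1) = q ≫ g := hJ.liftFromProjective_comp _ _
  obtain ⟨w, hdw, hw⟩ := shift_vanish P J hE k 0 (P.complex.d 1 0 ≫ α) (by simp) (by
    rw [Category.assoc, hα, ← Category.assoc, hq, zero_comp])
  have hz : P.complex.d 1 0 ≫ (α - w) = 0 := by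
    rw [Preadditive.comp_sub, sub_eq_zero]; exact hw.symm
  let β : A ⟶ J.cocomplex.X k := P.exact₀.desc (α - w) hz
  have hβ : q ≫ β = α - w := P.exact₀.g_desc _ hz
  refine ⟨β, ?_⟩
  rw [← cancel_epi q, ← Category.assoc, hβ, Preadditive.sub_comp, hdw, hα, sub_zero]

lemma hom_exact_zero {A N : C} (J : InjectiveResolution N)
    (hA : ∀ g : A ⟶ N, g = 0)
    (g : A ⟶ J.cocomplex.X 0) (hdg : g ≫ J.cocomplex.d 0 1 = 0) : g = 0 := by
  let c : A ⟶ N := J.exact₀.lift g hdg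
  have hc : c ≫ J.ι.f 0 = g := J.exact₀.lift_f g hdg
  rw [← hc, hA c]
  exact zero_comp

variable (R : Type u) [CommRing R]

lemma ext_vanish (S N : Type u) [AddCommGroup S] [Module R S] [AddCommGroup N] [Module R N]
    (h : ∀ n : ℕ, 0 < n → Subsingleton (extmod R S N n))
    (P : ProjectiveResolution (ModuleCat.of R S)) (i : ℕ)
    (g : P.complex.X (i+1) ⟶ ModuleCat.of R N) (hg : P.complex.d (i+2) (i+1) ≫ g = 0) :
    ∃ g' : P.complex.X i ⟶ ModuleCat.of R N, P.complex.d (i+1) i ≫ g' = g := by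
  have h1 := h (i+1) (Nat.succ_pos i)
  have h2 : IsZero (extmod R S N (i+1)) := ModuleCat.isZero_of_subsingleton _
  have h3 := h2.of_iso (P.isoExt (R := R) (i+1) (ModuleCat.of R N)).symm
  rw [← HomologicalComplex.exactAt_iff_isZero_homology,
    HomologicalComplex.exactAt_iff' _ i (i+1) (i+2) (by simp) (by simp),
    ShortComplex.moduleCat_exact_iff] at h3
  obtain ⟨x, hx⟩ := h3 g hg
  exact ⟨x, hx⟩

end part2

section part3

open Limits

variable {C : Type*} [Category* C] [Abelian C]

/-- Identification of a chain complex with a cochain complex, up to reindexing. -/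
structure Reindex (I : ChainComplex C ℤ) (L : CochainComplex C ℤ) where
  φ : ∀ n m : ℤ, n + m = 0 → (I.X n ≅ L.X m)
  comm : ∀ (n m n' m' : ℤ) (h : n + m = 0) (h' : n' + m' = 0),
    (φ n m h).hom ≫ L.d m m' = I.d n n' ≫ (φ n' m' h').hom

lemma Reindex.comm_inv {I : ChainComplex C ℤ} {L : CochainComplex C ℤ} (e : Reindex I L)
    (n m n' m' : ℤ) (h : n + m = 0) (h' : n' + m' = 0) :
    L.d m m' ≫ (e.φ n' m' h').inv = (e.φ n m h).inv ≫ I.d n n' := by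
  rw [Iso.comp_inv_eq, Category.assoc, ← e.comm n m n' m' h h', Iso.inv_hom_id_assoc]

/-- Every cochain complex can be reindexed as a chain complex. -/
noncomputable def reindexCh (L : CochainComplex C ℤ) :
    Reindex (L.restriction ComplexShape.embeddingDownIntUpInt) L where
  φ n m h := L.XIsoOfEq (show -n = m by lia)
  comm n m n' m' h h' := by
    obtain rfl : m = -n := by lia
    obtain rfl : m' = -n' := by lia
    exact (Category.id_comp _).trans (Category.comp_id _).symm

/-- Every chain complex can be reindexed as a cochain complex. -/
noncomputable def reindexCo (M : ChainComplex C ℤ) :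
    Reindex M (M.restriction ComplexShape.embeddingUpIntDownInt) where
  φ n m h := M.XIsoOfEq (show n = -m by lia)
  comm n m n' m' h h' := by
    obtain rfl : n = -m := by lia
    obtain rfl : n' = -m' := by lia
    exact (Category.id_comp _).trans (Category.comp_id _).symm

/-- The reindexed morphism. -/
noncomputable def Reindex.map {M I : ChainComplex C ℤ} {K L : CochainComplex C ℤ}
    (a : Reindex M K) (b : Reindex I L) (f : M ⟶ I) : K ⟶ L where
  f m := (a.φ (-m) m (by lia)).inv ≫ f.f (-m) ≫ (b.φ (-m) m (by lia)).hom
  comm' i j _ := by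
    rw [Category.assoc, Category.assoc, b.comm (-i) i (-j) j (by lia) (by lia),
      ← Category.assoc (K.d i j), a.comm_inv (-i) i (-j) j (by lia) (by lia)]
    simp

lemma Reindex.map_f {M I : ChainComplex C ℤ} {K L : CochainComplex C ℤ}
    (a : Reindex M K) (b : Reindex I L) (f : M ⟶ I) (n m : ℤ) (h : n + m = 0) :
    f.f n = (a.φ n m h).hom ≫ (a.map b f).f m ≫ (b.φ n m h).inv := by
  obtain rfl : n = -m := by lia
  simp [Reindex.map]

lemma Reindex.homotopy {M I : ChainComplex C ℤ} {K L : CochainComplex C ℤ}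
    (a : Reindex M K) (b : Reindex I L) (f : M ⟶ I)
    (h : Homotopy (a.map b f) 0) : Nonempty (Homotopy f 0) := by
  refine ⟨⟨fun p q => (a.φ p (-p) (by lia)).hom ≫ h.hom (-p) (-q) ≫
    (b.φ q (-q) (by lia)).inv, ?_, ?_⟩⟩
  · intro p q hpq
    rw [h.zero, zero_comp, comp_zero]
    intro h'
    apply hpq
    simp only [ComplexShape.up_Rel, ComplexShape.down_Rel] at h' ⊢
    lia
  · intro n
    have hc := h.comm (-n)
    rw [dNext_eq _ (i' := -(n-1)) (by simp; lia), prevD_eq _ (j' := -(n+1)) (by simp)] at hc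
    rw [dNext_eq _ (i' := n-1) (by simp), prevD_eq _ (j' := n+1) (by simp),
      a.map_f b f n (-n) (by lia), hc]
    simp only [HomologicalComplex.zero_f, add_zero, Preadditive.comp_add, Preadditive.add_comp,
      Category.assoc]
    rw [b.comm_inv (n+1) (-(n+1)) n (-n) (by lia) (by lia),
      ← Category.assoc (a.φ n (-n) _).hom (K.d _ _), a.comm n (-n) (n-1) (-(n-1)) (by lia) (by lia)]
    simp

lemma Reindex.acyclic {M : ChainComplex C ℤ} {K : CochainComplex C ℤ}
    (a : Reindex M K) (h : ∀ n, M.ExactAt n) : K.Acyclic := by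
  intro m
  have := h (-m)
  rw [HomologicalComplex.exactAt_iff' _ (-(m-1)) (-m) (-(m+1)) (by simp; lia) (by simp; lia)] at this
  rw [HomologicalComplex.exactAt_iff' _ (m-1) (m) (m+1) (by simp) (by simp)]
  refine (ShortComplex.exact_iff_of_iso (ShortComplex.isoMk (a.φ _ _ (by lia)) (a.φ _ _ (by lia))
    (a.φ _ _ (by lia)) ?_ ?_)).1 this
  · exact a.comm _ _ _ _ _ _
  · exact a.comm _ _ _ _ _ _

end part3

section part4

open Limits

variable {C : Type*} [Category* C] [Abelian C]

/-- The comparison of the reindexed extended complex with the original one. -/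
noncomputable def Reindex.toNat {I : ChainComplex C ℤ} {J : CochainComplex C ℕ}
    (e : Reindex I (J.extend ComplexShape.embeddingUpNat)) (n : ℤ) (k : ℕ) (h : n + k = 0) :
    I.X n ≅ J.X k :=
  e.φ n k h ≪≫ J.extendXIso ComplexShape.embeddingUpNat (i := k) (i' := (k : ℤ)) rfl

lemma Reindex.toNat_comm {I : ChainComplex C ℤ} {J : CochainComplex C ℕ}
    (e : Reindex I (J.extend ComplexShape.embeddingUpNat)) (n n' : ℤ) (k k' : ℕ) (h : n + k = 0)
    (h' : n' + k' = 0) :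
    (e.toNat n k h).hom ≫ J.d k k' = I.d n n' ≫ (e.toNat n' k' h').hom := by
  simp only [Reindex.toNat, Iso.trans_hom, Category.assoc]
  rw [← Category.assoc (I.d n n'), ← e.comm n k n' k' h h',
    J.extend_d_eq ComplexShape.embeddingUpNat (i := k) (i' := (k : ℤ)) (j := k') (j' := (k' : ℤ))
      rfl rfl]
  simp

lemma Reindex.isZero {I : ChainComplex C ℤ} {J : CochainComplex C ℕ}
    (e : Reindex I (J.extend ComplexShape.embeddingUpNat)) (n : ℤ) (hn : 0 < n) :
    IsZero (I.X n) := by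
  refine IsZero.of_iso ?_ (e.φ n (-n) (by lia))
  apply J.isZero_extend_X
  intro i hi
  simp at hi
  lia

lemma hom_exact_all {A N : C} (P : ProjectiveResolution A) (J : InjectiveResolution N)
    (hE : ∀ (i : ℕ) (g : P.complex.X (i+1) ⟶ N), P.complex.d (i+2) (i+1) ≫ g = 0 →
      ∃ g' : P.complex.X i ⟶ N, P.complex.d (i+1) i ≫ g' = g)
    (hA : ∀ g : A ⟶ N, g = 0) {I : ChainComplex C ℤ}
    (e : Reindex I (J.cocomplex.extend ComplexShape.embeddingUpNat)) (n : ℤ)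
    (g : A ⟶ I.X (n+1)) (hg : g ≫ I.d (n+1) n = 0) :
    ∃ h : A ⟶ I.X (n+1+1), h ≫ I.d (n+1+1) (n+1) = g := by
  by_cases hn : 0 < n + 1
  · exact ⟨0, (e.isZero _ hn).eq_of_tgt _ _⟩
  obtain ⟨k, hk⟩ : ∃ k : ℕ, n + 1 + k = 0 := ⟨(-(n+1)).toNat, by lia⟩
  have hcyc : (g ≫ (e.toNat (n+1) k hk).hom) ≫ J.cocomplex.d k (k+1) = 0 := by
    rw [Category.assoc, e.toNat_comm (n+1) n k (k+1) hk (by push_cast; lia), ← Category.assoc, hg,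
      zero_comp]
  obtain _ | k := k
  · refine ⟨0, ?_⟩
    have := hom_exact_zero J hA _ hcyc
    rw [← cancel_mono (e.toNat (n+1) 0 hk).hom, this]
    simp
  · obtain ⟨h, hh⟩ := hom_exact_succ P J hE k _ hcyc
    have hk' : n + 1 + 1 + (k : ℤ) = 0 := by push_cast at hk; lia
    refine ⟨h ≫ (e.toNat (n+1+1) k hk').inv, ?_⟩
    rw [← cancel_mono (e.toNat (n+1) (k+1) hk).hom, ← hh, Category.assoc, Category.assoc,
      ← e.toNat_comm _ _ _ _ hk' hk, Iso.inv_hom_id_assoc]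

lemma zero_of_exact {N : C} (J : InjectiveResolution N) {I : ChainComplex C ℤ}
    (e : Reindex I (J.cocomplex.extend ComplexShape.embeddingUpNat)) (h : ∀ n, I.ExactAt n) :
    IsZero N := by
  have h0 := h 0
  rw [HomologicalComplex.exactAt_iff' _ 1 0 (-1) (by simp) (by simp)] at h0
  have hm : Mono (I.d 0 (-1)) := h0.mono_g ((e.isZero 1 one_pos).eq_of_src _ _)
  let ι0 : N ⟶ J.cocomplex.X 0 := J.ι.f 0
  have hι : ι0 ≫ J.cocomplex.d 0 1 = 0 := J.ι_f_zero_comp_complex_d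
  have hm : Mono ι0 := inferInstanceAs (Mono (J.ι.f 0))
  have hz : ι0 ≫ (e.toNat 0 0 (by simp)).inv = 0 := by
    rw [← cancel_mono (I.d 0 (-1)), ← cancel_mono (e.toNat (-1) 1 (by simp)).hom,
      Category.assoc, Category.assoc, ← e.toNat_comm 0 (-1) 0 1 (by simp) (by simp),
      Iso.inv_hom_id_assoc, hι]
    simp
  have : ι0 = 0 := by
    rw [← cancel_mono (e.toNat 0 0 (by simp)).inv, hz, zero_comp]
  exact IsZero.of_mono_eq_zero ι0 this

lemma semiInjective_of_reindex {R : Type u} [CommRing R] {N : ModuleCat.{u} R}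
    (J : InjectiveResolution N) {I : ChainComplex (ModuleCat.{u} R) ℤ}
    (e : Reindex I (J.cocomplex.extend ComplexShape.embeddingUpNat)) : SemiInjective R I := by
  constructor
  · intro n
    exact Injective.of_iso (e.φ n (-n) (by lia)).symm inferInstance
  · intro M hM f
    have ha := (reindexCo M).acyclic hM
    obtain ⟨h⟩ := CochainComplex.IsKInjective.nonempty_homotopy_zero ((reindexCo M).map e f) ha
    exact (reindexCo M).homotopy e f h

end part4

/-- Let `R` be a commutative noetherian ring and `S` a faithfully flat (commutative)
`R`-algebra.  If `X` is an `R`-complex such that `RHom_R(S,X)` is acyclic — presented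
here by `Hom_R(S,I)` for a semi-injective resolution `I` of `X` — then `X` is acyclic.
In particular, an `R`-module `N` with `Hom_R(S,N) = 0` and `Ext_R^n(S,N) = 0` for all
`n > 0` is the zero module. -/
theorem acyclic_of_rhomS_acyclic
    (R : Type u) [CommRing R] [IsNoetherianRing R]
    (S : Type u) [CommRing S] [Algebra R S] [Module.FaithfullyFlat R S] :
    (∀ (X I : ChainComplex (ModuleCat.{u} R) ℤ) (f : X ⟶ I),
        SemiInjective R I → QuasiIso f →
        isAcyclic (homComplex (ModuleCat.of R S) I) → isAcyclic X) ∧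
    (∀ (N : Type u) [AddCommGroup N] [Module R N],
        Subsingleton (S →ₗ[R] N) → (∀ n : ℕ, 0 < n → Subsingleton (extmod R S N n)) →
        Subsingleton N) := by
  constructor
  · intro X I f hI hf h i
    have hac := acyclic_core hI S ((tmod_of_homComplex I S).1 h)
    exact (quasiIsoAt_iff_exactAt' f i (hac i)).1 inferInstance
  · intro N _ _ hN hE
    let P := ProjectiveResolution.of (ModuleCat.of R S)
    let J := InjectiveResolution.of (ModuleCat.of R N)
    let L := J.cocomplex.extend ComplexShape.embeddingUpNat
    let I : ChainComplex (ModuleCat.{u} R) ℤ :=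
      L.restriction ComplexShape.embeddingDownIntUpInt
    let e : Reindex I L := reindexCh L
    have hI : SemiInjective R I := semiInjective_of_reindex J e
    have hA : ∀ g : ModuleCat.of R S ⟶ ModuleCat.of R N, g = 0 := fun g =>
      ModuleCat.hom_ext (Subsingleton.elim (α := S →ₗ[R] N) _ _)
    have hT : TMod I S := by
      intro n g hg
      obtain ⟨h, hh⟩ := hom_exact_all P J (ext_vanish R S N hE P) hA e n (ModuleCat.ofHom g)
        (by ext x; exact hg x)
      refine ⟨h.hom, fun x => ?_⟩
      exact LinearMap.congr_fun (congrArg ModuleCat.Hom.hom hh) x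
    have hz := zero_of_exact J e (acyclic_core hI S hT)
    exact ModuleCat.subsingleton_of_isZero hz
end
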